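/- Quantitative infimum comparison for supersolutions: Let Y = (y,s) ∈ ℝ^{n+1}, r > 0, h ∈ (0,1), and let v ∈ C^{2,1} on the closure of Q_r(Y) satisfy v ≥ 0 and −v_t + Lv ≤ 0 at every point of Q_r(Y). Let D_ρ := B_ρ(z) × {τ} and D⁰ := B_{r/2}(y) × {σ} be disks such that B_ρ(z) ⊂ B_r(y) and s − r² ≤ τ < τ + h²r² ≤ σ ≤ s. Then inf_{D_ρ} v ≤ (2r/ρ)^γ · inf_{D⁰} v, where γ is a positive constant depending only on n, ν, h and S. -/

import Mathlib

open MeasureTheory ENNReal Metric Set RealInnerProductSpace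

noncomputable section

/-- `n`-dimensional Euclidean space. -/
abbrev En (n : ℕ) : Type := EuclideanSpace ℝ (Fin n)

variable {n : ℕ}

/-- Time derivative `u_t`. -/
def Dt (u : En n × ℝ → ℝ) (X : En n × ℝ) : ℝ :=
  deriv (fun t => u (X.1, t)) X.2

/-- First spatial derivative `D_i u`. -/
def Dx (u : En n × ℝ → ℝ) (i : Fin n) (X : En n × ℝ) : ℝ :=
  fderiv ℝ (fun x => u (x, X.2)) X.1 (EuclideanSpace.single i 1)

/-- Second spatial derivative `D_{ij} u`. -/
def Dxx (u : En n × ℝ → ℝ) (i j : Fin n) (X : En n × ℝ) : ℝ :=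
  Dx (Dx u j) i X

/-- `u` is of class `C^{2,1}` on `Q`: `u`, `D_i u`, `D_{ij} u`, `u_t` exist and are
continuous on `Q`. -/
structure IsC21 (u : En n × ℝ → ℝ) (Q : Set (En n × ℝ)) : Prop where
  cont : ContinuousOn u Q
  diff_t : ∀ X ∈ Q, DifferentiableAt ℝ (fun t => u (X.1, t)) X.2
  diff_x : ∀ X ∈ Q, DifferentiableAt ℝ (fun x => u (x, X.2)) X.1
  diff_xx : ∀ j : Fin n, ∀ X ∈ Q, DifferentiableAt ℝ (fun x => Dx u j (x, X.2)) X.1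
  cont_t : ContinuousOn (Dt u) Q
  cont_x : ∀ i, ContinuousOn (Dx u i) Q
  cont_xx : ∀ i j, ContinuousOn (Dxx u i j) Q

/-- Uniform parabolicity with constant `ν` on `Q`:
`ν⁻¹|ξ|² ≤ Σ a_ij ξ_i ξ_j` and `Σ a_ij² ≤ ν²`. -/
def UnifParabolic (ν : ℝ) (a : En n × ℝ → Matrix (Fin n) (Fin n) ℝ)
    (Q : Set (En n × ℝ)) : Prop :=
  ∀ X ∈ Q, (∀ ξ : Fin n → ℝ, ν⁻¹ * (∑ i, ξ i ^ 2) ≤ ∑ i, ∑ j, a X i j * ξ i * ξ j) ∧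
    (∑ i, ∑ j, (a X i j) ^ 2) ≤ ν ^ 2

/-- `Lu = Σ_{ij} a_ij D_ij u + Σ_i b_i D_i u`. -/
def Lop (a : En n × ℝ → Matrix (Fin n) (Fin n) ℝ) (b : En n × ℝ → En n)
    (u : En n × ℝ → ℝ) (X : En n × ℝ) : ℝ :=
  (∑ i, ∑ j, a X i j * Dxx u i j X) + ∑ i, b X i * Dx u i X

/-- `∫ (ess sup_t |f(x,t)|)ⁿ dx`, the `n`-th power of the `L^n_x L^∞_t` norm of `f`
over the set `Q ⊆ ℝⁿ × ℝ`. -/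
def LxnLtinfPow {E : Type*} [NNNorm E] (f : En n × ℝ → E) (Q : Set (En n × ℝ)) : ℝ≥0∞ :=
  ∫⁻ x, (essSup (fun t => (‖f (x, t)‖₊ : ℝ≥0∞)) (volume.restrict {t | (x, t) ∈ Q})) ^ n

/-- The `L^n_x L^∞_t` norm of `f` over `Q`. -/
def LxnLtinf {E : Type*} [NNNorm E] (f : En n × ℝ → E) (Q : Set (En n × ℝ)) : ℝ≥0∞ :=
  (LxnLtinfPow f Q) ^ (1 / (n : ℝ))

/-- The box `B_ρ(y) × (t₁, t₂)`. -/
def box (y : En n) (ρ t₁ t₂ : ℝ) : Set (En n × ℝ) := ball y ρ ×ˢ Ioo t₁ t₂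

/-- The standard parabolic cylinder `Q_r(Y) = B_r(y) × (s - r², s)`. -/
def pcyl (Y : En n × ℝ) (r : ℝ) : Set (En n × ℝ) := box Y.1 r (Y.2 - r ^ 2) Y.2

/-- The slanted cylinder `V_r(Y) = {(x,t) : |x - (t/s)y| < r, 0 < t < s}`. -/
def slantCyl (Y : En n × ℝ) (r : ℝ) : Set (En n × ℝ) :=
  {X | ‖X.1 - (X.2 / Y.2) • Y.1‖ < r ∧ 0 < X.2 ∧ X.2 < Y.2}

/-- Supremum of the positive part `u₊` over a set `A`. -/
def supPos (u : En n × ℝ → ℝ) (A : Set (En n × ℝ)) : ℝ :=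
  sSup ((fun X => max (u X) 0) '' A)

/-- `Ω` is a Lipschitz domain with character `(rΩ, mΩ)`: at every boundary point `y`
there is a coordinate frame, encoded by the unit "vertical" direction `e`, in which
`Ω ∩ B_{rΩ}(y)` is the region above the graph of an `mΩ`-Lipschitz function `φ`
of the tangential variables. -/
def IsLipschitzDomain (Ω : Set (En n)) (rΩ mΩ : ℝ) : Prop :=
  0 < rΩ ∧ 0 ≤ mΩ ∧
  ∀ y ∈ frontier Ω, ∃ (e : En n) (φ : En n → ℝ),
    ‖e‖ = 1 ∧ LipschitzWith (Real.toNNReal mΩ) φ ∧ φ 0 = 0 ∧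
    (∀ x, x ∈ Ω ∩ ball y rΩ ↔
      dist x y < rΩ ∧ φ ((x - y) - ⟪x - y, e⟫ • e) < ⟪x - y, e⟫) ∧
    (∀ ρ : ℝ, 0 < ρ → ρ ≤ rΩ → y + ρ • e ∈ Ω)

/-!
A level set of a supersolution is controlled through an Aleksandrov–Bakelman–Pucci estimate for
the infimum of `v` over time. Where an affine function touches this infimum minus a barrier from
below, the supersolution inequality bounds the second-order growth there by a multiple of `1 + g`,
with `g x = ess sup_t |b (x, t)|`. The slope is then Lipschitz in the contact point with a constant
of this size, so the slopes attained fill a volume at most a multiple of the integral of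
`(1 + g)ⁿ`. If the drift is small this is too little volume.

A drift of arbitrary size `S` is dealt with twice by counting. Among many disjoint annuli there is
one on which the drift is small, and there a barrier propagates positivity inwards. Among many
separated scales of slopes, each of which needs a fixed amount of drift, one must fail, and there
positivity spreads from a small ball to a larger one. Iterating the resulting expansion of balls
`log (r / ρ)` times, at the cost of a constant factor each time, gives the power `(2r / ρ)^γ`.
-/

/-! ### Contact sets and their measure -/

section Antilipschitz

variable {E : Type*} [NormedAddCommGroup E] [NormedSpace ℝ E] [FiniteDimensional ℝ E]
  [MeasurableSpace E] [BorelSpace E] (μ : Measure E) [μ.IsAddHaarMeasure]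

open Module Measure NNReal

lemma addHaar_le_mul_addHaar_image_of_dist_le {A : Set E} {X : E → E} {L : ℝ≥0}
    (h : ∀ p ∈ A, ∀ q ∈ A, dist p q ≤ L * dist (X p) (X q)) :
    μ A ≤ (L : ℝ≥0∞) ^ finrank ℝ E * μ (X '' A) := by
  have hanti : AntilipschitzWith L (A.domRestrict X) :=
    AntilipschitzWith.of_le_mul_dist fun p q => h p p.2 q q.2
  have hdim : (0 : ℝ) ≤ finrank ℝ E := Nat.cast_nonneg _
  have hausdorff := hanti.le_hausdorffMeasure_image hdim univ
  rw [← (isometry_subtype_coe (s := A)).hausdorffMeasure_image (.inl hdim), image_univ,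
    image_univ, Subtype.range_coe, range_domRestrict, ENNReal.rpow_natCast] at hausdorff
  rw [isAddLeftInvariant_eq_smul μ μH[finrank ℝ E]]
  simp only [Measure.smul_apply, ENNReal.smul_def, smul_eq_mul]
  rw [mul_left_comm]
  gcongr

lemma addHaar_le_mul_addHaar_image_of_locally_dist_le {A : Set E} {X : E → E} {L : ℝ≥0} {δ : ℝ}
    (hδ : 0 < δ)
    (h : ∀ p ∈ A, ∀ q ∈ A, dist (X p) (X q) < δ → dist p q ≤ L * dist (X p) (X q)) :
    μ A ≤ (L : ℝ≥0∞) ^ finrank ℝ E * μ (X '' A) := by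
  obtain ⟨D, hDm, hDb, hDdiam, hDunion, hDdisj⟩ :=
    SeparableSpace.exists_measurable_partition_diam_le E (half_pos hδ)
  have piece : ∀ i, μ (A ∩ X ⁻¹' D i) ≤ (L : ℝ≥0∞) ^ finrank ℝ E * μ (D i ∩ X '' A) := fun i => by
    rw [inter_comm (D i), image_inter_preimage X A (D i) |>.symm]
    refine addHaar_le_mul_addHaar_image_of_dist_le μ fun p hp q hq => h p hp.1 q hq.1 ?_
    linarith [dist_le_diam_of_mem (hDb i) hp.2 hq.2, hDdiam i]
  calc μ A = μ (⋃ i, A ∩ X ⁻¹' D i) := by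
        rw [← inter_iUnion, ← preimage_iUnion, hDunion, preimage_univ, inter_univ]
    _ ≤ ∑' i, μ (A ∩ X ⁻¹' D i) := measure_iUnion_le _
    _ ≤ ∑' i, (L : ℝ≥0∞) ^ finrank ℝ E * μ.restrict (X '' A) (D i) := by
        gcongr with i
        rw [restrict_apply (hDm i)]
        exact piece i
    _ = (L : ℝ≥0∞) ^ finrank ℝ E * μ (X '' A) := by
        rw [ENNReal.tsum_mul_left, ← measure_iUnion hDdisj hDm, hDunion, restrict_apply_univ]

end Antilipschitz

lemma measure_le_of_dyadic_level_le {α β : Type*} [MeasurableSpace α] [MeasurableSpace β]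
    {μ : Measure α} {ρ : Measure β} {A : Set α} {S : Set β} {k : α → ℝ≥0∞} {K : β → ℝ≥0∞}
    (hS : MeasurableSet S) (hK : Measurable K)
    (hzero : μ (A ∩ k ⁻¹' {0}) ≤ ρ (S ∩ K ⁻¹' {0}))
    (htop : μ (A ∩ k ⁻¹' {∞}) ≤ ρ (S ∩ K ⁻¹' {∞}))
    (hdyadic : ∀ i : ℤ,
      μ (A ∩ k ⁻¹' Ico (((2 : NNReal) : ℝ≥0∞) ^ i) (((2 : NNReal) : ℝ≥0∞) ^ (i + 1))) ≤
        ρ (S ∩ K ⁻¹' Ico (((2 : NNReal) : ℝ≥0∞) ^ i) (((2 : NNReal) : ℝ≥0∞) ^ (i + 1)))) :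
    μ A ≤ ρ S := by
  have hcover : A ⊆ (A ∩ k ⁻¹' {0}) ∪ (A ∩ k ⁻¹' {∞}) ∪ ⋃ i : ℤ,
      A ∩ k ⁻¹' Ico (((2 : NNReal) : ℝ≥0∞) ^ i) (((2 : NNReal) : ℝ≥0∞) ^ (i + 1)) := fun p hp => by
    by_cases h0 : k p = 0
    · exact .inl (.inl ⟨hp, h0⟩)
    by_cases h1 : k p = ∞
    · exact .inl (.inr ⟨hp, h1⟩)
    obtain ⟨i, hi⟩ := ENNReal.exists_mem_Ico_zpow h0 h1
      (one_lt_coe_iff.2 one_lt_two : 1 < ((2 : NNReal) : ℝ≥0∞)) coe_ne_top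
    exact .inr (mem_iUnion.2 ⟨i, hp, hi⟩)
  rw [measure_eq_measure_preimage_add_measure_tsum_Ico_zpow ρ hK hS one_lt_two]
  exact (measure_mono hcover).trans <| (measure_union_le _ _).trans <|
    add_le_add ((measure_union_le _ _).trans (add_le_add hzero htop))
      ((measure_iUnion_le _).trans (ENNReal.tsum_le_tsum hdyadic))

section Contact

variable {E : Type*} [NormedAddCommGroup E] [InnerProductSpace ℝ E]

/-- The affine function with slope `p` through `(x, W x)` supports `W` from below on `D`. -/
def IsSubgradientOn (W : E → ℝ) (D : Set E) (x p : E) : Prop :=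
  ∀ z ∈ D, W x + ⟪p, z - x⟫ ≤ W z

/-- Second-order contact from above: near `x`, `W` lies below the paraboloid of opening `M` that
has slope `p` at `x`. -/
def QuadraticBoundAt (W : E → ℝ) (x p : E) (M : ℝ) : Prop :=
  ∀ᶠ z in nhds x, W z ≤ W x + ⟪p, z - x⟫ + M * ‖z - x‖ ^ 2

lemma QuadraticBoundAt.mono {W : E → ℝ} {x p : E} {M M' : ℝ} (h : QuadraticBoundAt W x p M)
    (hM : M ≤ M') : QuadraticBoundAt W x p M' :=
  Filter.Eventually.mono h fun _ hz => hz.trans (by gcongr)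

/-- Test the two affine supports at the point at distance `s` from `x'` in direction `q - p`. -/
lemma norm_sub_mul_le_of_isSubgradientOn {W : E → ℝ} {D : Set E} {M δ : ℝ} {x x' p q : E}
    (hM : 0 ≤ M) (hp : IsSubgradientOn W D x p) (hq : IsSubgradientOn W D x' q) (hx' : x' ∈ D)
    (hup : ∀ z ∈ ball x δ, z ∈ D ∧ W z ≤ W x + ⟪p, z - x⟫ + M * ‖z - x‖ ^ 2)
    {s : ℝ} (hs : 0 < s) (hsδ : dist x x' + s < δ) :
    ‖q - p‖ * s ≤ M * (s + dist x x') ^ 2 := by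
  rcases eq_or_ne q p with rfl | hne
  · simp only [sub_self, norm_zero, zero_mul]
    positivity
  have hpos : 0 < ‖q - p‖ := norm_pos_iff.2 (sub_ne_zero.2 hne)
  obtain ⟨z, hz⟩ : ∃ z, z - x' = (s / ‖q - p‖) • (q - p) := ⟨_, add_sub_cancel_left x' _⟩
  have hzx' : ‖z - x'‖ = s := by
    rw [hz, norm_smul, Real.norm_of_nonneg (by positivity), div_mul_cancel₀ _ hpos.ne']
  have hinner : ⟪q - p, z - x'⟫ = ‖q - p‖ * s := by
    rw [hz, inner_smul_right, real_inner_self_eq_norm_sq]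
    field_simp
  have hzx : ‖z - x‖ ≤ s + dist x x' := by
    rw [← hzx', dist_comm, dist_eq_norm]
    exact norm_sub_le_norm_sub_add_norm_sub z x' x
  obtain ⟨hzD, hWz⟩ := hup z (by rw [mem_ball, dist_eq_norm]; linarith)
  have hsplit : ⟪p, z - x⟫ = ⟪p, z - x'⟫ + ⟪p, x' - x⟫ := by
    rw [← inner_add_right, sub_add_sub_cancel]
  have hsq : M * ‖z - x‖ ^ 2 ≤ M * (s + dist x x') ^ 2 := by gcongr
  rw [inner_sub_left] at hinner
  linarith [hp x' hx', hq z hzD]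

lemma dist_le_of_isSubgradientOn {W : E → ℝ} {D : Set E} {M δ : ℝ} {x x' p q : E}
    (hM : 0 ≤ M) (hp : IsSubgradientOn W D x p) (hq : IsSubgradientOn W D x' q) (hx' : x' ∈ D)
    (hup : ∀ z ∈ ball x δ, z ∈ D ∧ W z ≤ W x + ⟪p, z - x⟫ + M * ‖z - x‖ ^ 2)
    (hd : dist x x' < δ / 2) : dist p q ≤ 4 * M * dist x x' := by
  have key : ∀ s : ℝ, 0 < s → dist x x' + s < δ → ‖q - p‖ * s ≤ M * (s + dist x x') ^ 2 :=
    fun s => norm_sub_mul_le_of_isSubgradientOn hM hp hq hx' hup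
  rw [dist_comm p q, dist_eq_norm q p]
  rcases (dist_nonneg (x := x) (y := x')).eq_or_lt with h0 | h0
  · rw [← h0] at key hd ⊢
    rw [mul_zero]
    by_contra! hpos
    obtain ⟨s, hs0, hs⟩ := exists_between
      (lt_min (half_pos (by linarith : 0 < δ)) (by positivity : 0 < ‖q - p‖ / (M + 1)))
    obtain ⟨hsδ, hsM⟩ := lt_min_iff.1 hs
    rw [lt_div_iff₀ (by positivity)] at hsM
    nlinarith [key s hs0 (by linarith)]
  · have := key (dist x x') h0 (by linarith)
    exact le_of_mul_le_mul_right (this.trans_eq (by ring)) h0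

variable [FiniteDimensional ℝ E] [MeasurableSpace E] [BorelSpace E]

open Module NNReal

lemma volume_le_mul_volume_image_of_isSubgradientOn {W : E → ℝ} {D A : Set E} {X : E → E}
    {L : ℝ≥0} (hD : ∀ p ∈ A, D ∈ nhds (X p)) (hlow : ∀ p ∈ A, IsSubgradientOn W D (X p) p)
    (hup : ∀ p ∈ A, QuadraticBoundAt W (X p) p L) :
    volume A ≤ ((4 * L : ℝ≥0) : ℝ≥0∞) ^ finrank ℝ E * volume (X '' A) := by
  let B : ℕ → Set E := fun j => {p ∈ A | ∀ z ∈ ball (X p) (1 / ((j : ℝ) + 1)),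
    z ∈ D ∧ W z ≤ W (X p) + ⟪p, z - X p⟫ + L * ‖z - X p‖ ^ 2}
  have hmono : Monotone B := fun i j hij p hp =>
    ⟨hp.1, fun z hz => hp.2 z (ball_subset_ball (by gcongr) hz)⟩
  have hcover : A ⊆ ⋃ j, B j := fun p hp => by
    obtain ⟨δ, hδ, hball⟩ := eventually_nhds_iff_ball.1
      ((Filter.eventually_mem_set.2 (hD p hp)).and (hup p hp))
    obtain ⟨j, hj⟩ := exists_nat_one_div_lt hδ
    exact mem_iUnion.2 ⟨j, hp, fun z hz => hball z (ball_subset_ball hj.le hz)⟩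
  have hpiece (j : ℕ) :
      volume (B j) ≤ ((4 * L : ℝ≥0) : ℝ≥0∞) ^ finrank ℝ E * volume (X '' B j) := by
    refine addHaar_le_mul_addHaar_image_of_locally_dist_le volume
      (half_pos (by positivity : (0 : ℝ) < 1 / ((j : ℝ) + 1))) fun p hp q hq hd => ?_
    rw [NNReal.coe_mul]
    exact dist_le_of_isSubgradientOn L.2 (hlow p hp.1) (hlow q hq.1)
      (mem_of_mem_nhds (hD q hq.1)) hp.2 hd
  calc volume A ≤ volume (⋃ j, B j) := measure_mono hcover
    _ = ⨆ j, volume (B j) := hmono.measure_iUnion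
    _ ≤ _ := iSup_le fun j => (hpiece j).trans (by gcongr; exact fun p hp => hp.1)

lemma volume_eq_zero_of_isSubgradientOn [Nontrivial E] {W : E → ℝ} {D A : Set E} {X : E → E}
    (hD : ∀ p ∈ A, D ∈ nhds (X p)) (hlow : ∀ p ∈ A, IsSubgradientOn W D (X p) p)
    (hup : ∀ p ∈ A, ∃ M : ℝ, QuadraticBoundAt W (X p) p M) (hnull : volume (X '' A) = 0) :
    volume A = 0 := by
  have hcover : A ⊆ ⋃ m : ℕ, {p ∈ A | QuadraticBoundAt W (X p) p (m : ℝ≥0)} := fun p hp => by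
    obtain ⟨M, hM⟩ := hup p hp
    obtain ⟨m, hm⟩ := exists_nat_ge M
    exact mem_iUnion.2 ⟨m, hp, hM.mono (by simpa using hm)⟩
  refine measure_mono_null hcover (measure_iUnion_null fun m => ?_)
  have := volume_le_mul_volume_image_of_isSubgradientOn (fun p hp => hD p hp.1)
    (fun p hp => hlow p hp.1) (fun p hp => And.right hp :
      ∀ p ∈ {p ∈ A | QuadraticBoundAt W (X p) p (m : ℝ≥0)}, _)
  rwa [measure_mono_null (image_mono (sep_subset _ _)) hnull, mul_zero, nonpos_iff_eq_zero]
    at this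

lemma volume_contact_level_le {W : E → ℝ} {D A S : Set E} {X : E → E} {K : E → ℝ≥0∞}
    (hS : MeasurableSet S) {c : ℝ≥0}
    (hKc : ∀ x ∈ S, (c : ℝ≥0∞) ≤ K x ∧ K x ≤ (2 * c : ℝ≥0))
    (hX : MapsTo X A S) (hD : ∀ p ∈ A, D ∈ nhds (X p))
    (hlow : ∀ p ∈ A, IsSubgradientOn W D (X p) p)
    (hup : ∀ p ∈ A, K (X p) ≠ ∞ → QuadraticBoundAt W (X p) p (K (X p)).toReal) :
    volume A ≤ 8 ^ finrank ℝ E * ∫⁻ x in S, K x ^ finrank ℝ E := by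
  have hbound : volume A ≤ ((4 * (2 * c) : ℝ≥0) : ℝ≥0∞) ^ finrank ℝ E * volume (X '' A) :=
    volume_le_mul_volume_image_of_isSubgradientOn hD hlow fun p hp =>
      have hle := (hKc _ (hX hp)).2
      (hup p hp (ne_top_of_le_ne_top coe_ne_top hle)).mono (toReal_le_coe_of_le_coe hle)
  calc volume A ≤ _ := hbound
    _ ≤ ((4 * (2 * c) : ℝ≥0) : ℝ≥0∞) ^ finrank ℝ E * volume S := by gcongr; exact hX.image_subset
    _ = 8 ^ finrank ℝ E * ∫⁻ _ in S, (c : ℝ≥0∞) ^ finrank ℝ E := by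
        rw [setLIntegral_const]
        push_cast
        ring
    _ ≤ _ := by
        gcongr 8 ^ finrank ℝ E * ?_
        exact setLIntegral_mono' hS fun x hx => by gcongr; exact (hKc x hx).1

lemma volume_contact_top_le [Nontrivial E] {W : E → ℝ} {D A S : Set E} {X : E → E}
    {K : E → ℝ≥0∞} (hS : MeasurableSet S) (hK : ∀ x ∈ S, K x = ∞) (hX : MapsTo X A S)
    (hD : ∀ p ∈ A, D ∈ nhds (X p)) (hlow : ∀ p ∈ A, IsSubgradientOn W D (X p) p)
    (hup : ∀ p ∈ A, ∃ M : ℝ, QuadraticBoundAt W (X p) p M) :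
    volume A ≤ 8 ^ finrank ℝ E * ∫⁻ x in S, K x ^ finrank ℝ E := by
  have hint : ∫⁻ x in S, K x ^ finrank ℝ E = ∞ * volume S := by
    rw [← setLIntegral_const]
    exact setLIntegral_congr_fun hS fun x hx => by simp [hK x hx, finrank_pos.ne']
  rcases eq_or_ne (volume S) 0 with h0 | h0
  · rw [volume_eq_zero_of_isSubgradientOn hD hlow hup (measure_mono_null hX.image_subset h0)]
    exact zero_le
  · rw [hint, top_mul h0, mul_top (by positivity)]
    exact le_top

/-- The Aleksandrov–Bakelman–Pucci estimate of a set of slopes; on each dyadic level set of `K`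
the map sending a contact point to its slope is locally Lipschitz with constant `8 K`. -/
lemma volume_le_lintegral_of_isSubgradientOn [Nontrivial E] {W : E → ℝ} {D A S : Set E}
    {K : E → ℝ≥0∞} (hS : MeasurableSet S) (hK : Measurable K)
    (h : ∀ p ∈ A, ∃ x ∈ S, D ∈ nhds x ∧ IsSubgradientOn W D x p ∧
      (∃ M : ℝ, QuadraticBoundAt W x p M) ∧ (K x ≠ ∞ → QuadraticBoundAt W x p (K x).toReal)) :
    volume A ≤ 8 ^ finrank ℝ E * ∫⁻ x in S, K x ^ finrank ℝ E := by
  choose! X hXS hD hlow hbdd hup using h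
  set d := finrank ℝ E
  have hmeas {T : Set ℝ≥0∞} (hT : MeasurableSet T) : MeasurableSet (S ∩ K ⁻¹' T) :=
    hS.inter (hK hT)
  let ρ : Measure E := (8 : ℝ≥0∞) ^ d • volume.withDensity fun x => K x ^ d
  have hρ {B : Set E} (hB : MeasurableSet B) : ρ B = 8 ^ d * ∫⁻ x in B, K x ^ d := by
    simp only [ρ, Measure.smul_apply, withDensity_apply _ hB, smul_eq_mul]
  have hlevel {T : Set ℝ≥0∞} (hT : MeasurableSet T) {c : ℝ≥0}
      (hc : ∀ κ ∈ T, (c : ℝ≥0∞) ≤ κ ∧ κ ≤ (2 * c : ℝ≥0)) :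
      volume (A ∩ (K ∘ X) ⁻¹' T) ≤ ρ (S ∩ K ⁻¹' T) := by
    rw [hρ (hmeas hT)]
    exact volume_contact_level_le (hmeas hT) (fun x hx => hc _ hx.2)
      (fun p hp => ⟨hXS p hp.1, hp.2⟩) (fun p hp => hD p hp.1) (fun p hp => hlow p hp.1)
      fun p hp => hup p hp.1
  rw [← hρ hS]
  refine measure_le_of_dyadic_level_le (k := K ∘ X) hS hK ?_ ?_ fun k => ?_
  · exact hlevel (measurableSet_singleton 0) (c := 0) (by simp)
  · rw [hρ (hmeas (measurableSet_singleton ∞))]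
    exact volume_contact_top_le (hmeas (measurableSet_singleton ∞)) (fun x hx => hx.2)
      (fun p hp => ⟨hXS p hp.1, hp.2⟩) (fun p hp => hD p hp.1) (fun p hp => hlow p hp.1)
      fun p hp => hbdd p hp.1
  · refine hlevel measurableSet_Ico (c := 2 ^ k) fun κ hκ => ?_
    rw [mul_comm, ← zpow_add_one₀ two_ne_zero, coe_zpow two_ne_zero, coe_zpow two_ne_zero]
    exact ⟨hκ.1, hκ.2.le⟩

end Contact

/-! ### Elliptic matrices and quadratic forms -/

/-- The ellipticity condition that `UnifParabolic` imposes on the coefficient matrix at each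
point. -/
def IsElliptic (ν : ℝ) (a : Matrix (Fin n) (Fin n) ℝ) : Prop :=
  (∀ ξ : Fin n → ℝ, ν⁻¹ * (∑ i, ξ i ^ 2) ≤ ∑ i, ∑ j, a i j * ξ i * ξ j) ∧
    (∑ i, ∑ j, (a i j) ^ 2) ≤ ν ^ 2

/-- The entrywise pairing `Σ a_ij H_ij` of two matrices. -/
def contraction (a H : Matrix (Fin n) (Fin n) ℝ) : ℝ := ∑ i, ∑ j, a i j * H i j

/-- The quadratic form `Σ H_ij ξ_i ξ_j` of a matrix. -/
def quadForm (H : Matrix (Fin n) (Fin n) ℝ) (ξ : En n) : ℝ := ∑ i, ∑ j, H i j * ξ i * ξ j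

lemma contraction_add (a H G : Matrix (Fin n) (Fin n) ℝ) :
    contraction a (H + G) = contraction a H + contraction a G := by
  simp [contraction, mul_add, Finset.sum_add_distrib]

lemma contraction_sub (a H G : Matrix (Fin n) (Fin n) ℝ) :
    contraction a (H - G) = contraction a H - contraction a G := by
  simp [contraction, mul_sub, Finset.sum_sub_distrib]

lemma contraction_smul (a H : Matrix (Fin n) (Fin n) ℝ) (s : ℝ) :
    contraction a (s • H) = s * contraction a H := by
  simp [contraction, Finset.mul_sum, mul_left_comm]

lemma contraction_one (a : Matrix (Fin n) (Fin n) ℝ) : contraction a 1 = a.trace := by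
  simp [contraction, Matrix.trace, Matrix.one_apply]

lemma contraction_vecMulVec_self (a : Matrix (Fin n) (Fin n) ℝ) (x : En n) :
    contraction a (Matrix.vecMulVec x x) = quadForm a x := by
  simp [contraction, quadForm, Matrix.vecMulVec_apply, mul_assoc]

lemma quadForm_sub (H G : Matrix (Fin n) (Fin n) ℝ) (ξ : En n) :
    quadForm (H - G) ξ = quadForm H ξ - quadForm G ξ := by
  simp [quadForm, sub_mul, Finset.sum_sub_distrib]

lemma quadForm_smul_left (H : Matrix (Fin n) (Fin n) ℝ) (s : ℝ) (ξ : En n) :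
    quadForm (s • H) ξ = s * quadForm H ξ := by
  simp [quadForm, Finset.mul_sum, mul_assoc]

lemma quadForm_smul_right (H : Matrix (Fin n) (Fin n) ℝ) (s : ℝ) (ξ : En n) :
    quadForm H (s • ξ) = s ^ 2 * quadForm H ξ := by
  simp only [quadForm, Finset.mul_sum, PiLp.smul_apply, smul_eq_mul]
  exact Finset.sum_congr rfl fun i _ => Finset.sum_congr rfl fun j _ => by ring

lemma abs_quadForm_le (H : Matrix (Fin n) (Fin n) ℝ) (ξ : En n) :
    |quadForm H ξ| ≤ (∑ i, ∑ j, |H i j|) * ‖ξ‖ ^ 2 := by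
  simp only [quadForm, Finset.sum_mul]
  refine (Finset.abs_sum_le_sum_abs _ _).trans (Finset.sum_le_sum fun i _ =>
    (Finset.abs_sum_le_sum_abs _ _).trans (Finset.sum_le_sum fun j _ => ?_))
  have hi : |ξ i| ≤ ‖ξ‖ := PiLp.norm_apply_le ξ i
  have hj : |ξ j| ≤ ‖ξ‖ := PiLp.norm_apply_le ξ j
  calc |H i j * ξ i * ξ j| = |H i j| * (|ξ i| * |ξ j|) := by rw [abs_mul, abs_mul, mul_assoc]
    _ ≤ |H i j| * (‖ξ‖ * ‖ξ‖) := by gcongr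
    _ = |H i j| * ‖ξ‖ ^ 2 := by rw [sq]

section Gram

variable {m : Type*} [Fintype m] (B : Matrix m (Fin n) ℝ)

lemma trace_transpose_mul_self : (B.transpose * B).trace = ∑ k, ∑ i, B k i ^ 2 := by
  simp only [Matrix.trace, Matrix.diag_apply, Matrix.mul_apply, Matrix.transpose_apply, sq]
  exact Finset.sum_comm

lemma contraction_transpose_mul_self (a : Matrix (Fin n) (Fin n) ℝ) :
    contraction a (B.transpose * B) = ∑ k, ∑ i, ∑ j, a i j * B k i * B k j := by
  simp only [contraction, Matrix.mul_apply, Matrix.transpose_apply, Finset.mul_sum, mul_assoc]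
  exact (Finset.sum_congr rfl fun i _ => Finset.sum_comm).trans Finset.sum_comm

lemma quadForm_transpose_mul_self (ξ : En n) :
    quadForm (B.transpose * B) ξ = ∑ k, (∑ i, B k i * ξ i) ^ 2 := by
  have h := contraction_transpose_mul_self B (Matrix.vecMulVec ξ ξ)
  simp only [contraction, Matrix.vecMulVec_apply] at h
  calc quadForm (B.transpose * B) ξ
      = ∑ i, ∑ j, ξ i * ξ j * (B.transpose * B) i j := Finset.sum_congr rfl fun i _ =>
        Finset.sum_congr rfl fun j _ => by ring
    _ = ∑ k, ∑ i, ∑ j, ξ i * ξ j * B k i * B k j := h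
    _ = ∑ k, (∑ i, B k i * ξ i) ^ 2 := by
        simp only [sq, Finset.sum_mul_sum]
        exact Finset.sum_congr rfl fun k _ => Finset.sum_congr rfl fun i _ =>
          Finset.sum_congr rfl fun j _ => by ring

end Gram

lemma posSemidef_of_quadForm_nonneg {H : Matrix (Fin n) (Fin n) ℝ} (hs : H.IsSymm)
    (hp : ∀ ξ, 0 ≤ quadForm H ξ) : H.PosSemidef := by
  have hH : H.IsHermitian := (Matrix.conjTranspose_eq_transpose_of_trivial H).trans hs
  refine .of_dotProduct_mulVec_nonneg hH fun ξ => (hp (WithLp.toLp 2 ξ)).trans_eq ?_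
  simp only [quadForm, dotProduct, Matrix.mulVec, star_trivial, Finset.mul_sum]
  exact Finset.sum_congr rfl fun i _ => Finset.sum_congr rfl fun j _ => by ring

lemma exists_eq_transpose_mul_self_of_posSemidef {H : Matrix (Fin n) (Fin n) ℝ}
    (hH : H.PosSemidef) : ∃ B : Matrix (Fin n) (Fin n) ℝ, H = B.transpose * B := by
  open scoped MatrixOrder in
  exact CStarAlgebra.nonneg_iff_eq_star_mul_self.1 hH.nonneg

lemma quadForm_le_trace_mul {H : Matrix (Fin n) (Fin n) ℝ} (hH : H.PosSemidef) (ξ : En n) :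
    quadForm H ξ ≤ H.trace * ‖ξ‖ ^ 2 := by
  obtain ⟨B, rfl⟩ := exists_eq_transpose_mul_self_of_posSemidef hH
  rw [quadForm_transpose_mul_self, trace_transpose_mul_self, EuclideanSpace.real_norm_sq_eq,
    Finset.sum_mul]
  exact Finset.sum_le_sum fun k _ => Finset.sum_mul_sq_le_sq_mul_sq _ _ _

namespace IsElliptic

variable {ν : ℝ} {a : Matrix (Fin n) (Fin n) ℝ}

lemma trace_le_contraction (ha : IsElliptic ν a) {H : Matrix (Fin n) (Fin n) ℝ}
    (hH : H.PosSemidef) : ν⁻¹ * H.trace ≤ contraction a H := by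
  obtain ⟨B, rfl⟩ := exists_eq_transpose_mul_self_of_posSemidef hH
  rw [trace_transpose_mul_self, contraction_transpose_mul_self, Finset.mul_sum]
  exact Finset.sum_le_sum fun k _ => ha.1 (B k)

lemma le_quadForm (ha : IsElliptic ν a) (x : En n) : ν⁻¹ * ‖x‖ ^ 2 ≤ quadForm a x := by
  rw [EuclideanSpace.real_norm_sq_eq]
  exact ha.1 x

lemma abs_apply_le (ha : IsElliptic ν a) (hν : 0 ≤ ν) (i j : Fin n) : |a i j| ≤ ν := by
  refine abs_le_of_sq_le_sq (le_trans ?_ ha.2) hν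
  calc a i j ^ 2 ≤ ∑ j, a i j ^ 2 := Finset.single_le_sum (f := fun j => a i j ^ 2)
        (fun _ _ => sq_nonneg _) (Finset.mem_univ j)
    _ ≤ ∑ i, ∑ j, a i j ^ 2 := Finset.single_le_sum (f := fun i => ∑ j, a i j ^ 2)
        (fun _ _ => Finset.sum_nonneg fun _ _ => sq_nonneg _) (Finset.mem_univ i)

lemma abs_trace_le (ha : IsElliptic ν a) (hν : 0 ≤ ν) : |a.trace| ≤ n * ν := by
  calc |a.trace| ≤ ∑ i, |a i i| := Finset.abs_sum_le_sum_abs _ _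
    _ ≤ ∑ _i : Fin n, ν := Finset.sum_le_sum fun i _ => ha.abs_apply_le hν i i
    _ = n * ν := by simp

lemma quadForm_le (ha : IsElliptic ν a) (hν : 0 ≤ ν) (x : En n) :
    quadForm a x ≤ ν * ‖x‖ ^ 2 := by
  have hsum : quadForm a x = ∑ q : Fin n × Fin n, a q.1 q.2 * (x q.1 * x q.2) := by
    simp only [quadForm, Fintype.sum_prod_type, mul_assoc]
  have ha2 : ∑ q : Fin n × Fin n, a q.1 q.2 ^ 2 ≤ ν ^ 2 := by
    rw [Fintype.sum_prod_type]
    exact ha.2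
  have hx4 : ∑ q : Fin n × Fin n, (x q.1 * x q.2) ^ 2 = (‖x‖ ^ 2) ^ 2 := by
    simp only [Fintype.sum_prod_type, EuclideanSpace.real_norm_sq_eq, sq (∑ i, x i ^ 2),
      Finset.sum_mul_sum, mul_pow]
  refine le_of_sq_le_sq ?_ (by positivity)
  calc quadForm a x ^ 2 ≤ (∑ q : Fin n × Fin n, a q.1 q.2 ^ 2) *
        ∑ q : Fin n × Fin n, (x q.1 * x q.2) ^ 2 := by
        rw [hsum]
        exact Finset.sum_mul_sq_le_sq_mul_sq _ _ _
    _ ≤ ν ^ 2 * (‖x‖ ^ 2) ^ 2 := by rw [hx4]; gcongr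
    _ = (ν * ‖x‖ ^ 2) ^ 2 := by ring

end IsElliptic

/-! ### Second order expansions -/

/-- `f` has the second order Taylor expansion `f x + ⟪p, · - x⟫ + H(· - x, · - x) / 2` at `x`, with
symmetric Hessian `H`. -/
structure HasSecondOrderExpansionAt (f : En n → ℝ) (x p : En n)
    (H : Matrix (Fin n) (Fin n) ℝ) : Prop where
  isSymm : H.IsSymm
  isLittleO : (fun z => f z - f x - ⟪p, z - x⟫ - quadForm H (z - x) / 2)
    =o[nhds x] fun z => ‖z - x‖ ^ 2

namespace HasSecondOrderExpansionAt

variable {f : En n → ℝ} {x p : En n} {H : Matrix (Fin n) (Fin n) ℝ}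

lemma sub (hf : HasSecondOrderExpansionAt f x p H) {g : En n → ℝ} {q : En n}
    {G : Matrix (Fin n) (Fin n) ℝ} (hg : HasSecondOrderExpansionAt g x q G) :
    HasSecondOrderExpansionAt (fun z => f z - g z) x (p - q) (H - G) where
  isSymm := hf.isSymm.sub hg.isSymm
  isLittleO := (hf.isLittleO.sub hg.isLittleO).congr_left fun z => by
    rw [quadForm_sub, inner_sub_left]
    ring

lemma const_mul (hf : HasSecondOrderExpansionAt f x p H) (c : ℝ) :
    HasSecondOrderExpansionAt (fun z => c * f z) x (c • p) (c • H) where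
  isSymm := hf.isSymm.smul c
  isLittleO := (hf.isLittleO.const_mul_left c).congr_left fun z => by
    rw [quadForm_smul_left, real_inner_smul_left]
    ring

lemma const_add (hf : HasSecondOrderExpansionAt f x p H) (b : ℝ) :
    HasSecondOrderExpansionAt (fun z => b + f z) x p H where
  isSymm := hf.isSymm
  isLittleO := hf.isLittleO.congr_left fun z => by ring

lemma comp_add_smul {z : En n} {ρ : ℝ} (hf : HasSecondOrderExpansionAt f (z + ρ • x) p H) :
    HasSecondOrderExpansionAt (fun w => f (z + ρ • w)) x (ρ • p) (ρ ^ 2 • H) where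
  isSymm := hf.isSymm.smul _
  isLittleO := by
    have hc : Filter.Tendsto (fun w : En n => z + ρ • w) (nhds x) (nhds (z + ρ • x)) :=
      Continuous.tendsto (by fun_prop) x
    have hsub (w : En n) : z + ρ • w - (z + ρ • x) = ρ • (w - x) := by rw [smul_sub]; abel
    refine ((hf.isLittleO.comp_tendsto hc).congr_left fun w => ?_).trans_isBigO
      (Asymptotics.IsBigO.of_norm_le (g := fun w => ρ ^ 2 * ‖w - x‖ ^ 2) (fun w => ?_)
        |>.trans (Asymptotics.isBigO_const_mul_self _ _ _))
    · simp only [Function.comp_apply, hsub, quadForm_smul_right, quadForm_smul_left,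
        real_inner_smul_left, inner_smul_right]
    · simp [hsub, norm_smul, mul_pow]

lemma hasGradientAt (hf : HasSecondOrderExpansionAt f x p H) : HasGradientAt f p x := by
  have hsq : (fun z => ‖z - x‖ ^ 2) =o[nhds x] fun z => z - x :=
    (Asymptotics.isLittleO_norm_pow_id _root_.one_lt_two).comp_tendsto
      (tendsto_sub_nhds_zero_iff.2 Filter.tendsto_id)
  have hquad : (fun z => quadForm H (z - x) / 2) =O[nhds x] fun z => ‖z - x‖ ^ 2 := by
    refine Asymptotics.IsBigO.of_bound (∑ i, ∑ j, |H i j|) (Filter.Eventually.of_forall fun z => ?_)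
    rw [Real.norm_eq_abs, abs_div, abs_two, norm_pow, norm_norm]
    linarith [abs_quadForm_le H (z - x), abs_nonneg (quadForm H (z - x))]
  rw [hasGradientAt_iff_isLittleO]
  exact ((hf.isLittleO.trans hsq).add (hquad.trans_isLittleO hsq)).congr_left fun z => by ring

lemma eq_of_eventually_le (hf : HasSecondOrderExpansionAt f x p H) {p₀ : En n}
    (hlow : ∀ᶠ z in nhds x, f x + ⟪p₀, z - x⟫ ≤ f z) : p = p₀ := by
  have hd : HasFDerivAt (fun z => f z - ⟪p₀, z⟫) (innerSL ℝ p - innerSL ℝ p₀) x :=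
    hf.hasGradientAt.hasFDerivAt.sub (innerSL ℝ p₀).hasFDerivAt
  have hmin : IsLocalMin (fun z => f z - ⟪p₀, z⟫) x := by
    filter_upwards [hlow] with z hz
    rw [inner_sub_right] at hz
    linarith
  have h0 : ⟪p, p - p₀⟫ - ⟪p₀, p - p₀⟫ = 0 :=
    DFunLike.congr_fun (hmin.hasFDerivAt_eq_zero hd) (p - p₀)
  rw [← inner_sub_left] at h0
  exact sub_eq_zero.1 (inner_self_eq_zero.1 h0)

lemma posSemidef_of_eventually_le (hf : HasSecondOrderExpansionAt f x p H)
    (hlow : ∀ᶠ z in nhds x, f x + ⟪p, z - x⟫ ≤ f z) : H.PosSemidef := by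
  refine posSemidef_of_quadForm_nonneg hf.isSymm fun ξ => ?_
  have hline : Filter.Tendsto (fun s : ℝ => x + s • ξ) (nhds 0) (nhds x) := by
    have : Continuous (fun s : ℝ => x + s • ξ) := by fun_prop
    simpa using this.tendsto 0
  have hsq : (fun s : ℝ => ‖x + s • ξ - x‖ ^ 2) =O[nhds 0] fun s => s ^ 2 := by
    simpa [norm_smul, mul_pow, mul_comm] using
      Asymptotics.isBigO_const_mul_self (‖ξ‖ ^ 2) (fun s : ℝ => s ^ 2) (nhds 0)
  have hlim := ((hf.isLittleO.comp_tendsto hline).trans_isBigO hsq).tendsto_div_nhds_zero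
  have hnonneg : -(quadForm H ξ / 2) ≤ 0 := by
    refine ge_of_tendsto (hlim.mono_left (nhdsWithin_le_nhds (s := {0}ᶜ))) ?_
    filter_upwards [nhdsWithin_le_nhds (hline.eventually hlow), self_mem_nhdsWithin] with s hs h0
    have hs2 : 0 < s ^ 2 := by have : s ≠ 0 := h0; positivity
    simp only [Function.comp_apply, add_sub_cancel_left, quadForm_smul_right] at hs ⊢
    rw [le_div_iff₀ hs2]
    linarith
  linarith

/-- Under ellipticity, touching from below by an affine function controls the opening of the
paraboloid that touches from above. -/
lemma quadraticBoundAt (hf : HasSecondOrderExpansionAt f x p H) (hH : H.PosSemidef) {M : ℝ}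
    (hM : H.trace < 2 * M) : QuadraticBoundAt f x p M := by
  have hε : 0 < M - H.trace / 2 := by linarith
  filter_upwards [hf.isLittleO.def hε] with z hz
  rw [Real.norm_eq_abs, norm_pow, norm_norm] at hz
  linarith [le_of_abs_le hz, quadForm_le_trace_mul hH (z - x)]

end HasSecondOrderExpansionAt

/-! ### Expansions of twice differentiable functions -/

lemma apply_eq_sum_single (L : En n →L[ℝ] ℝ) (ξ : En n) :
    L ξ = ∑ i, ξ i * L (EuclideanSpace.single i 1) := by
  conv_lhs => rw [← (EuclideanSpace.basisFun (Fin n) ℝ).sum_repr ξ]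
  simp

/-- The Gram matrix of a bilinear form in the standard basis. -/
def bilinMatrix (B : En n →L[ℝ] En n →L[ℝ] ℝ) : Matrix (Fin n) (Fin n) ℝ :=
  Matrix.of fun i j => B (EuclideanSpace.single i 1) (EuclideanSpace.single j 1)

lemma quadForm_bilinMatrix (B : En n →L[ℝ] En n →L[ℝ] ℝ) (ξ : En n) :
    quadForm (bilinMatrix B) ξ = B ξ ξ := by
  have h : B ξ ξ = ∑ i, ξ i * B (EuclideanSpace.single i 1) ξ := apply_eq_sum_single (B.flip ξ) ξ
  rw [h, quadForm]
  refine Finset.sum_congr rfl fun i _ => ?_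
  rw [apply_eq_sum_single (B _) ξ, Finset.mul_sum]
  refine Finset.sum_congr rfl fun j _ => ?_
  simp only [bilinMatrix, Matrix.of_apply]
  ring

section Taylor

variable {E : Type*} [NormedAddCommGroup E] [NormedSpace ℝ E]

lemma hasFDerivAt_sub_taylor {f : E → ℝ} {L L' : E →L[ℝ] ℝ} {B : E →L[ℝ] E →L[ℝ] ℝ} {x w : E}
    (hsym : ∀ u w, B u w = B w u) (hf : HasFDerivAt f L' w) :
    HasFDerivAt (fun w => f w - L (w - x) - B (w - x) (w - x) / 2) (L' - L - B (w - x)) w := by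
  have hid : HasFDerivAt (fun w => w - x) (ContinuousLinearMap.id ℝ E) w :=
    (hasFDerivAt_id w).sub_const x
  have hL : HasFDerivAt (fun w => L (w - x)) L w := L.hasFDerivAt.comp w hid
  have hB : HasFDerivAt (fun w => B (w - x)) B w := B.hasFDerivAt.comp w hid
  refine (((hf.sub hL).sub ((hB.clm_apply hid).const_mul (1 / 2 : ℝ))).congr_fderiv ?_)
    |>.congr_of_eventuallyEq (Filter.Eventually.of_forall fun w => ?_)
  · ext u
    simp only [sub_apply, smul_apply, add_apply, ContinuousLinearMap.comp_apply,
      ContinuousLinearMap.id_apply, ContinuousLinearMap.flip_apply, smul_eq_mul]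
    rw [hsym u (w - x)]
    ring
  · simp only [Pi.sub_apply]
    ring

lemma isLittleO_taylor_two {f : E → ℝ} {f' : E → E →L[ℝ] ℝ} {B : E →L[ℝ] E →L[ℝ] ℝ} {x : E}
    (h1 : ∀ᶠ z in nhds x, HasFDerivAt f (f' z) z) (h2 : HasFDerivAt f' B x) :
    (fun z => f z - f x - f' x (z - x) - B (z - x) (z - x) / 2) =o[nhds x]
      fun z => ‖z - x‖ ^ 2 := by
  have hsym : ∀ u w, B u w = B w u := fun u w =>
    second_derivative_symmetric_of_eventually_of_real h1 h2 u w
  refine Asymptotics.IsLittleO.of_bound fun ε hε => ?_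
  obtain ⟨δ, hδ, hb⟩ := Metric.eventually_nhds_iff_ball.1 (h1.and (h2.isLittleO.def hε))
  filter_upwards [ball_mem_nhds x hδ] with z hz
  have hsub : closedBall x ‖z - x‖ ⊆ ball x δ :=
    closedBall_subset_ball (by simpa [dist_eq_norm] using hz)
  have hbd : ∀ w ∈ closedBall x ‖z - x‖, ‖f' w - f' x - B (w - x)‖ ≤ ε * ‖z - x‖ := by
    intro w hw
    refine (hb w (hsub hw)).2.trans ?_
    rw [mem_closedBall, dist_eq_norm] at hw
    gcongr
  have hmv := (convex_closedBall x ‖z - x‖).norm_image_sub_le_of_norm_hasFDerivWithin_le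
    (fun w hw => (hasFDerivAt_sub_taylor hsym (hb w (hsub hw)).1).hasFDerivWithinAt) hbd
    (mem_closedBall_self (norm_nonneg _)) (by simp [dist_eq_norm] : z ∈ closedBall x ‖z - x‖)
  simp only [sub_self, map_zero] at hmv
  calc _ = _ := by congr 1; ring
    _ ≤ _ := hmv
    _ = _ := by rw [norm_pow, norm_norm]; ring

end Taylor

lemma HasSecondOrderExpansionAt.of_hasFDerivAt {f : En n → ℝ} {f' : En n → En n →L[ℝ] ℝ}
    {B : En n →L[ℝ] En n →L[ℝ] ℝ} {x : En n} (h1 : ∀ᶠ z in nhds x, HasFDerivAt f (f' z) z)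
    (h2 : HasFDerivAt f' B x) :
    HasSecondOrderExpansionAt f x (WithLp.toLp 2 fun i => f' x (EuclideanSpace.single i 1))
      (bilinMatrix B) where
  isSymm := Matrix.IsSymm.ext fun _ _ => second_derivative_symmetric_of_eventually_of_real h1 h2 _ _
  isLittleO := (isLittleO_taylor_two h1 h2).congr_left fun z => by
    rw [quadForm_bilinMatrix, apply_eq_sum_single (f' x), PiLp.inner_apply]
    simp

lemma HasSecondOrderExpansionAt.comp_norm_sq {F F₁ : ℝ → ℝ} {F₂ : ℝ} (x : En n)
    (h1 : ∀ s, HasDerivAt F (F₁ s) s) (h2 : HasDerivAt F₁ F₂ (‖x‖ ^ 2)) :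
    HasSecondOrderExpansionAt (fun z => F (‖z‖ ^ 2)) x ((2 * F₁ (‖x‖ ^ 2)) • x)
      ((4 * F₂) • Matrix.vecMulVec x x + (2 * F₁ (‖x‖ ^ 2)) • 1) := by
  obtain ⟨T, hT⟩ : ∃ T : En n →L[ℝ] En n →L[ℝ] ℝ, ∀ u w, T u w = ⟪u, w⟫ :=
    ⟨innerSL ℝ, fun _ _ => rfl⟩
  have hnorm (z : En n) : HasFDerivAt (fun z => ‖z‖ ^ 2) (2 • T z) z := by
    rw [show T z = innerSL ℝ z from ContinuousLinearMap.ext (hT z)]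
    exact (hasStrictFDerivAt_norm_sq z).hasFDerivAt
  have hF (z : En n) : HasFDerivAt (fun z => F (‖z‖ ^ 2)) (F₁ (‖z‖ ^ 2) • (2 • T z)) z :=
    (h1 _).comp_hasFDerivAt z (hnorm z)
  have hF₁ : HasFDerivAt (fun z : En n => F₁ (‖z‖ ^ 2)) (F₂ • (2 • T x)) x :=
    h2.comp_hasFDerivAt x (hnorm x)
  convert HasSecondOrderExpansionAt.of_hasFDerivAt (Filter.Eventually.of_forall hF)
    (hF₁.smul (2 • T).hasFDerivAt) using 1
  · ext i
    simp [hT, EuclideanSpace.inner_single_right]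
    ring
  · ext i j
    simp only [bilinMatrix, Matrix.of_apply, Matrix.add_apply, Matrix.smul_apply,
      Matrix.vecMulVec_apply, Matrix.one_apply, add_apply, smul_apply,
      ContinuousLinearMap.smulRight_apply, hT, EuclideanSpace.inner_single_right]
    rcases eq_or_ne i j with rfl | h
    · simp
      ring
    · simp [h, h.symm]
      ring

/-- The gradient in the space variables, assembled from the partial derivatives `Dx`; its entries
are junk where these do not exist. -/
def spaceGradient (v : En n × ℝ → ℝ) (X : En n × ℝ) : En n := WithLp.toLp 2 fun i => Dx v i X

/-- The Hessian in the space variables, with the same convention as `spaceGradient`. -/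
def spaceHessian (v : En n × ℝ → ℝ) (X : En n × ℝ) : Matrix (Fin n) (Fin n) ℝ :=
  Matrix.of fun i j => Dxx v i j X

lemma HasSecondOrderExpansionAt.of_isC21 {v : En n × ℝ → ℝ} {Q : Set (En n × ℝ)} (hv : IsC21 v Q)
    {x : En n} {t : ℝ} (hx : ∀ᶠ z in nhds x, (z, t) ∈ Q) :
    HasSecondOrderExpansionAt (fun z => v (z, t)) x (spaceGradient v (x, t))
      (spaceHessian v (x, t)) := by
  have hv1 : ∀ᶠ z in nhds x,
      HasFDerivAt (fun z => v (z, t)) (fderiv ℝ (fun z => v (z, t)) z) z := by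
    filter_upwards [hx] with z hz
    exact (hv.diff_x _ hz).hasFDerivAt
  have hrep (z : En n) : fderiv ℝ (fun z => v (z, t)) z
      = ∑ j, Dx v j (z, t) • (EuclideanSpace.proj j : En n →L[ℝ] ℝ) := by
    ext ξ
    rw [apply_eq_sum_single]
    simp [Dx, mul_comm]
  have hv2 : HasFDerivAt (fun z => fderiv ℝ (fun z => v (z, t)) z)
      (∑ j, (fderiv ℝ (fun z => Dx v j (z, t)) x).smulRight
        (EuclideanSpace.proj j : En n →L[ℝ] ℝ)) x := by
    simp only [hrep]
    exact HasFDerivAt.fun_sum fun j _ =>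
      (hv.diff_xx j _ hx.self_of_nhds).hasFDerivAt.smul_const
        (EuclideanSpace.proj j : En n →L[ℝ] ℝ)
  convert HasSecondOrderExpansionAt.of_hasFDerivAt hv1 hv2 using 1
  · rfl
  · refine Matrix.ext fun i j => ?_
    have hij : (fderiv ℝ (fun z => Dx v j (z, t)) x) (EuclideanSpace.single i 1) =
        ∑ k, (fderiv ℝ (fun z => Dx v k (z, t)) x) (EuclideanSpace.single i 1) *
          (EuclideanSpace.single j (1 : ℝ) : En n) k := by
      simp
    simp only [bilinMatrix, Matrix.of_apply, sum_apply, ContinuousLinearMap.smulRight_apply,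
      smul_apply, smul_eq_mul]
    exact hij

/-! ### Supersolutions -/

/-- `v` is at `(x, t)` a supersolution of `-v_t + Σ a_ij D_ij v + g |Dv| = 0` for some elliptic
`a`. Nothing beyond differentiability is required where the drift bound `g` is infinite, because
this happens on a null set of `x`. -/
def IsSupersolutionAt (ν : ℝ) (g : ℝ≥0∞) (v : En n × ℝ → ℝ) (x : En n) (t : ℝ) : Prop :=
  ∃ (q : ℝ) (p : En n) (H : Matrix (Fin n) (Fin n) ℝ),
    HasDerivAt (fun s => v (x, s)) q t ∧ HasSecondOrderExpansionAt (fun z => v (z, t)) x p H ∧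
    (g ≠ ∞ → ∃ a, IsElliptic ν a ∧ contraction a H ≤ q + g.toReal * ‖p‖)

/-- Continuous nonnegative supersolutions on `ball y r × [t₁, t₂]`, with a drift of modulus at most
`g x` at every point `(x, t)`. -/
structure IsSupersolution (ν : ℝ) (g : En n → ℝ≥0∞) (v : En n × ℝ → ℝ) (y : En n)
    (r t₁ t₂ : ℝ) : Prop where
  measurable_drift : Measurable g
  continuousOn : ContinuousOn v (ball y r ×ˢ Icc t₁ t₂)
  nonneg : ∀ x ∈ ball y r, ∀ t ∈ Icc t₁ t₂, 0 ≤ v (x, t)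
  isSupersolutionAt : ∀ x ∈ ball y r, ∀ t ∈ Icc t₁ t₂, IsSupersolutionAt ν (g x) v x t

lemma IsSupersolutionAt.rescale {ν ρ c τ t : ℝ} {g : ℝ≥0∞} {v : En n × ℝ → ℝ} {z x : En n}
    (h : IsSupersolutionAt ν g v (z + ρ • x) (τ + ρ ^ 2 * t)) (hρ : 0 < ρ) (hc : 0 < c) :
    IsSupersolutionAt ν (ENNReal.ofReal ρ * g)
      (fun X => c * v (z + ρ • X.1, τ + ρ ^ 2 * X.2)) x t := by
  obtain ⟨q, p, H, hq, hH, hle⟩ := h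
  refine ⟨c * (ρ ^ 2 * q), c • (ρ • p), c • (ρ ^ 2 • H), ?_, hH.comp_add_smul.const_mul c, ?_⟩
  · have htime : HasDerivAt (fun s : ℝ => τ + ρ ^ 2 * s) (ρ ^ 2) t := by
      simpa using ((hasDerivAt_id t).const_mul (ρ ^ 2)).const_add τ
    have hcomp := (HasDerivAt.comp t hq htime).const_mul c
    exact hcomp.congr_deriv (by ring)
  · intro hg
    obtain ⟨a, ha, hle⟩ := hle fun h => hg (by rw [h, mul_top (by simpa using hρ)])
    refine ⟨a, ha, ?_⟩
    rw [contraction_smul, contraction_smul, toReal_mul, toReal_ofReal hρ.le, norm_smul,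
      norm_smul, Real.norm_of_nonneg hc.le, Real.norm_of_nonneg hρ.le]
    calc c * (ρ ^ 2 * contraction a H) ≤ c * (ρ ^ 2 * (q + g.toReal * ‖p‖)) := by gcongr
      _ = _ := by ring

namespace IsSupersolution

variable {ν : ℝ} {g : En n → ℝ≥0∞} {v : En n × ℝ → ℝ} {y : En n} {r t₁ t₂ : ℝ}

lemma mono (hv : IsSupersolution ν g v y r t₁ t₂) {y' : En n} {r' t₁' t₂' : ℝ}
    (hb : ball y' r' ⊆ ball y r) (h1 : t₁ ≤ t₁') (h2 : t₂' ≤ t₂) :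
    IsSupersolution ν g v y' r' t₁' t₂' where
  measurable_drift := hv.measurable_drift
  continuousOn := hv.continuousOn.mono (prod_mono hb (Icc_subset_Icc h1 h2))
  nonneg x hx t ht := hv.nonneg x (hb hx) t (Icc_subset_Icc h1 h2 ht)
  isSupersolutionAt x hx t ht := hv.isSupersolutionAt x (hb hx) t (Icc_subset_Icc h1 h2 ht)

lemma rescale (hv : IsSupersolution ν g v y r t₁ t₂) {ρ c : ℝ} (hρ : 0 < ρ) (hc : 0 < c)
    (z : En n) (τ : ℝ) {y' : En n} {r' t₁' t₂' : ℝ} (hb : ∀ x ∈ ball y' r', z + ρ • x ∈ ball y r)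
    (ht : ∀ t ∈ Icc t₁' t₂', τ + ρ ^ 2 * t ∈ Icc t₁ t₂) :
    IsSupersolution ν (fun x => ENNReal.ofReal ρ * g (z + ρ • x))
      (fun X => c * v (z + ρ • X.1, τ + ρ ^ 2 * X.2)) y' r' t₁' t₂' where
  measurable_drift := by have := hv.measurable_drift; fun_prop
  continuousOn := continuousOn_const.mul <| hv.continuousOn.comp (by fun_prop)
    fun X hX => ⟨hb X.1 hX.1, ht X.2 hX.2⟩
  nonneg x hx t htt := mul_nonneg hc.le (hv.nonneg _ (hb x hx) _ (ht t htt))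
  isSupersolutionAt x hx t htt :=
    (hv.isSupersolutionAt _ (hb x hx) _ (ht t htt)).rescale hρ hc

end IsSupersolution

lemma setLIntegral_rescale_pow {g : En n → ℝ≥0∞} (hg : Measurable g) {ρ : ℝ} (hρ : 0 < ρ)
    (z : En n) {B : Set (En n)} (hB : MeasurableSet B) :
    ∫⁻ x in (fun x => z + ρ • x) ⁻¹' B, (ENNReal.ofReal ρ * g (z + ρ • x)) ^ n =
      ∫⁻ x in B, g x ^ n := by
  have hmap : Measure.map (fun x : En n => z + ρ • x) volume =
      ENNReal.ofReal (ρ ^ n)⁻¹ • volume := by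
    rw [show (fun x : En n => z + ρ • x) = (z + ·) ∘ (ρ • ·) from rfl,
      ← Measure.map_map (g := (z + ·)) (f := (ρ • ·)) (by fun_prop) (by fun_prop),
      Measure.map_addHaar_smul _ hρ.ne', Measure.map_smul, map_add_left_eq_self]
    simp [abs_of_pos hρ]
  rw [← setLIntegral_map hB (f := fun x => (ENNReal.ofReal ρ * g x) ^ n) (by fun_prop)
    (by fun_prop), hmap, setLIntegral_smul_measure]
  simp only [mul_pow]
  rw [lintegral_const_mul _ (by fun_prop), smul_eq_mul, ← mul_assoc, ← ofReal_pow hρ.le,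
    ← ofReal_mul (by positivity), inv_mul_cancel₀ (by positivity), ofReal_one, one_mul]

/-! ### Contact points in space-time -/

/-- The affine function of slope `p` through `(x, f (x, t))`, constant in time, lies below `f` on
`D × I`. -/
def IsContactPoint (f : En n × ℝ → ℝ) (D : Set (En n)) (I : Set ℝ) (p x : En n) (t : ℝ) : Prop :=
  ∀ z ∈ D, ∀ t' ∈ I, f (x, t) + ⟪p, z - x⟫ ≤ f (z, t')

/-- The points of `D` over which some slope in `A` is in contact with `f` from below. -/
def contactSet (f : En n × ℝ → ℝ) (D : Set (En n)) (I : Set ℝ) (A : Set (En n)) : Set (En n) :=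
  {x | x ∈ D ∧ ∃ t ∈ I, ∃ p ∈ A, IsContactPoint f D I p x t}

/-- The infimum of `f` over the times in `I`. -/
def timeInf (f : En n × ℝ → ℝ) (I : Set ℝ) (z : En n) : ℝ := sInf ((fun t => f (z, t)) '' I)

lemma exists_isContactPoint {f : En n × ℝ → ℝ} {D : Set (En n)} {I : Set ℝ} (hD : IsCompact D)
    (hI : IsCompact I) (hD0 : D.Nonempty) (hI0 : I.Nonempty) (hf : ContinuousOn f (D ×ˢ I))
    (p : En n) : ∃ x ∈ D, ∃ t ∈ I, IsContactPoint f D I p x t := by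
  obtain ⟨⟨x, t⟩, hxt, hmin⟩ := (hD.prod hI).exists_isMinOn (hD0.prod hI0)
    (f := fun X => f X - ⟪p, X.1⟫) (by fun_prop)
  refine ⟨x, hxt.1, t, hxt.2, fun z hz t' ht' => ?_⟩
  have hle := isMinOn_iff.1 hmin (z, t') ⟨hz, ht'⟩
  rw [inner_sub_right]
  linarith

lemma isCompact_contactSet {f : En n × ℝ → ℝ} {D A : Set (En n)} {I : Set ℝ} (hD : IsCompact D)
    (hI : IsCompact I) (hA : IsCompact A) (hf : ContinuousOn f (D ×ˢ I)) :
    IsCompact (contactSet f D I A) := by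
  set K : Set ((En n × ℝ) × En n) := (D ×ˢ I) ×ˢ A
  have hK : IsCompact K := (hD.prod hI).prod hA
  set Z : Set ((En n × ℝ) × En n) := K ∩ ⋂ z ∈ D, ⋂ t' ∈ I,
    {q ∈ K | f q.1 + ⟪q.2, z - q.1.1⟫ ≤ f (z, t')}
  have hZ : IsCompact Z := by
    refine hK.inter_right (isClosed_biInter fun z _ => isClosed_biInter fun t' _ => ?_)
    refine hK.isClosed.isClosed_le ?_ continuousOn_const
    exact (hf.comp (by fun_prop) fun q hq => hq.1).add (by fun_prop)
  have hproj : contactSet f D I A = (fun q => q.1.1) '' Z := by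
    ext x
    constructor
    · rintro ⟨hx, t, ht, p, hp, hc⟩
      have hk : ((x, t), p) ∈ K := ⟨⟨hx, ht⟩, hp⟩
      exact ⟨((x, t), p), ⟨hk, mem_iInter₂.2 fun z hz =>
        mem_iInter₂.2 fun t' ht' => ⟨hk, hc z hz t' ht'⟩⟩, rfl⟩
    · rintro ⟨⟨⟨x', t⟩, p⟩, ⟨hk, hq⟩, rfl⟩
      simp only [mem_iInter] at hq
      exact ⟨hk.1.1, t, hk.1.2, p, hk.2, fun z hz t' ht' => (hq z hz t' ht').2⟩
  rw [hproj]
  exact hZ.image (by fun_prop)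

namespace IsContactPoint

variable {f : En n × ℝ → ℝ} {D : Set (En n)} {I : Set ℝ} {p x : En n} {t : ℝ}

lemma timeInf_le (h : IsContactPoint f D I p x t) {z : En n} (hz : z ∈ D) {t' : ℝ} (ht' : t' ∈ I) :
    timeInf f I z ≤ f (z, t') :=
  csInf_le ⟨_, forall_mem_image.2 (h z hz)⟩ (mem_image_of_mem _ ht')

lemma le_timeInf (h : IsContactPoint f D I p x t) (hI : I.Nonempty) {z : En n} (hz : z ∈ D) :
    f (x, t) + ⟪p, z - x⟫ ≤ timeInf f I z :=
  le_csInf (hI.image _) (forall_mem_image.2 (h z hz))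

lemma timeInf_eq (h : IsContactPoint f D I p x t) (hx : x ∈ D) (ht : t ∈ I) :
    timeInf f I x = f (x, t) :=
  le_antisymm (h.timeInf_le hx ht) (by simpa using h.le_timeInf ⟨t, ht⟩ hx)

lemma isSubgradientOn_timeInf (h : IsContactPoint f D I p x t) (hx : x ∈ D) (ht : t ∈ I) :
    IsSubgradientOn (timeInf f I) D x p := fun z hz => by
  rw [h.timeInf_eq hx ht]
  exact h.le_timeInf ⟨t, ht⟩ hz

lemma quadraticBoundAt_timeInf (h : IsContactPoint f D I p x t) (hD : D ∈ nhds x) (ht : t ∈ I)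
    {M : ℝ} (hM : QuadraticBoundAt (fun z => f (z, t)) x p M) :
    QuadraticBoundAt (timeInf f I) x p M := by
  filter_upwards [hM, hD] with z hz hzD
  rw [h.timeInf_eq (mem_of_mem_nhds hD) ht]
  exact (h.timeInf_le hzD ht).trans hz

lemma of_le (h : IsContactPoint f D I p x t) {t' : ℝ} (hle : f (x, t') ≤ f (x, t)) :
    IsContactPoint f D I p x t' := fun z hz s hs =>
  (add_le_add_left hle _).trans (h z hz s hs)

lemma eventually_le (h : IsContactPoint f D I p x t) (hD : D ∈ nhds x) (ht : t ∈ I) :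
    ∀ᶠ z in nhds x, f (x, t) + ⟪p, z - x⟫ ≤ f (z, t) := by
  filter_upwards [hD] with z hz using h z hz t ht

lemma deriv_nonpos {t₁ t₂ : ℝ} (h : IsContactPoint f D (Icc t₁ t₂) p x t) (hx : x ∈ D)
    (ht : t ∈ Ioc t₁ t₂) {q : ℝ} (hq : HasDerivAt (fun s => f (x, s)) q t) : q ≤ 0 := by
  refine le_of_tendsto ((hasDerivAt_iff_tendsto_slope.1 hq).mono_left
    (nhdsWithin_mono (s := Iio t) _ fun s hs => ne_of_lt hs)) ?_
  filter_upwards [Ioo_mem_nhdsLT ht.1] with s hs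
  have hle : f (x, t) ≤ f (x, s) := by
    simpa using h x hx s ⟨hs.1.le, hs.2.le.trans ht.2⟩
  rw [slope_def_field]
  exact div_nonpos_of_nonneg_of_nonpos (by linarith) (by linarith [hs.2])

end IsContactPoint

/-! ### The parabolic contact estimate -/

lemma trace_le_of_isElliptic {ν α β γ q q' : ℝ} (hν : 0 < ν) (hγ : 0 ≤ γ) {p : En n}
    {a H H' : Matrix (Fin n) (Fin n) ℝ} (ha : IsElliptic ν a) (hH : (H - H').PosSemidef)
    (hq : q - q' ≤ 0) (hsup : contraction a H ≤ q + γ * ‖p‖) (hα : q' - contraction a H' ≤ α)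
    (hβ : ‖p‖ ≤ β) : (H - H').trace ≤ ν * (α + β * γ) := by
  rw [← inv_mul_le_iff₀ hν]
  have htrace := ha.trace_le_contraction hH
  rw [contraction_sub] at htrace
  have hdrift : γ * ‖p‖ ≤ β * γ := by rw [mul_comm β]; gcongr
  linarith

/-- The contact set of the time infimum of `v - ψ`: where an affine function touches, ellipticity
bounds the second derivatives by the first ones. -/
lemma IsSupersolution.volume_le_lintegral [NeZero n] {ν α β : ℝ} (hν : 0 < ν) (hα : 0 < α)
    (hβ : 0 < β) {g : En n → ℝ≥0∞} {v ψ : En n × ℝ → ℝ} {y : En n} {r t₁ t₂ : ℝ}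
    (hv : IsSupersolution ν g v y r t₁ t₂) {D S A : Set (En n)} (hD : D ⊆ ball y r)
    (hS : MeasurableSet S)
    (h : ∀ p ∈ A, ∃ x ∈ S, ∃ t ∈ Ioc t₁ t₂, D ∈ nhds x ∧
      IsContactPoint (fun X => v X - ψ X) D (Icc t₁ t₂) p x t ∧
      ∃ (q : ℝ) (pψ : En n) (Hψ : Matrix (Fin n) (Fin n) ℝ), HasDerivAt (fun s => ψ (x, s)) q t ∧
        HasSecondOrderExpansionAt (fun z => ψ (z, t)) x pψ Hψ ∧
        (∀ a, IsElliptic ν a → q - contraction a Hψ ≤ α) ∧ ‖pψ + p‖ ≤ β) :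
    volume A ≤ 8 ^ n *
      ∫⁻ x in S, (ENNReal.ofReal ν * (ENNReal.ofReal α + ENNReal.ofReal β * g x)) ^ n := by
  have hmeas := hv.measurable_drift
  have hcontact := volume_le_lintegral_of_isSubgradientOn (D := D) (A := A)
    (W := timeInf (fun X => v X - ψ X) (Icc t₁ t₂))
    (K := fun x => ENNReal.ofReal ν * (ENNReal.ofReal α + ENNReal.ofReal β * g x)) hS
    (by fun_prop) fun p hp => ?_
  · simpa using hcontact
  obtain ⟨x, hxS, t, ht, hDx, hc, q', p', H', hq', hH', hα', hβ'⟩ := h p hp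
  have hx : x ∈ D := mem_of_mem_nhds hDx
  have htI : t ∈ Icc t₁ t₂ := Ioc_subset_Icc_self ht
  obtain ⟨q, pv, H, hq, hH, hsup⟩ := hv.isSupersolutionAt x (hD hx) t htI
  have hexp := hH.sub hH'
  have hgrad : pv - p' = p := hexp.eq_of_eventually_le (hc.eventually_le hDx htI)
  rw [hgrad] at hexp
  have hpsd := hexp.posSemidef_of_eventually_le (hc.eventually_le hDx htI)
  have hquad {M : ℝ} (hM : (H - H').trace < 2 * M) := hc.quadraticBoundAt_timeInf hDx htI
    (hexp.quadraticBoundAt hpsd hM)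
  refine ⟨x, hxS, hDx, hc.isSubgradientOn_timeInf hx htI,
    ⟨_, hquad (M := (H - H').trace / 2 + 1) (by linarith)⟩, fun hK => hquad ?_⟩
  have hg : g x ≠ ∞ := fun hg => hK (by
    simp [hg, ENNReal.mul_top, hβ.not_ge, hν.not_ge])
  obtain ⟨a, ha, hle⟩ := hsup hg
  have htrace := trace_le_of_isElliptic hν toReal_nonneg ha hpsd
    (hc.deriv_nonpos hx ht (hq.sub hq')) hle (hα' a ha)
    (β := β) (by rwa [← hgrad, add_sub_cancel] at hβ')
  have hpos : 0 < ν * (α + β * (g x).toReal) := by positivity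
  rw [toReal_mul, toReal_add ofReal_ne_top (by finiteness), toReal_mul, toReal_ofReal hν.le,
    toReal_ofReal hα.le, toReal_ofReal hβ.le]
  linarith

lemma lintegral_add_pow_le {α : Type*} [MeasurableSpace α] {μ : Measure α} {g : α → ℝ≥0∞}
    (hg : Measurable g) (a b : ℝ≥0∞) (k : ℕ) :
    ∫⁻ x, (a + b * g x) ^ k ∂μ ≤ 2 ^ k * (a ^ k * μ univ + b ^ k * ∫⁻ x, g x ^ k ∂μ) := by
  have hpow (c d : ℝ≥0∞) : (c + d) ^ k ≤ 2 ^ k * (c ^ k + d ^ k) := by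
    calc (c + d) ^ k ≤ (2 * max c d) ^ k := by
          gcongr
          rw [two_mul]
          exact add_le_add (le_max_left c d) (le_max_right c d)
      _ ≤ 2 ^ k * (c ^ k + d ^ k) := by
          rw [mul_pow]
          gcongr
          rcases le_total c d with h | h <;> simp [h]
  calc ∫⁻ x, (a + b * g x) ^ k ∂μ ≤ ∫⁻ x, 2 ^ k * (a ^ k + b ^ k * g x ^ k) ∂μ := by
        gcongr with x
        rw [← mul_pow]
        exact hpow _ _
    _ = _ := by
        rw [lintegral_const_mul _ (by fun_prop), lintegral_add_left (by fun_prop),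
          lintegral_const_mul _ (by fun_prop), lintegral_const]

lemma setLIntegral_mul_one_add_pow_le {α : Type*} [MeasurableSpace α] {μ : Measure α}
    {g : α → ℝ≥0∞} (hg : Measurable g) {D : Set α} {c V S : ℝ} {k : ℕ} (hc : 0 ≤ c)
    (hV : μ D ≤ ENNReal.ofReal V) (hS : ∫⁻ x in D, g x ^ k ∂μ ≤ ENNReal.ofReal S) (hV0 : 0 ≤ V)
    (hS0 : 0 ≤ S) :
    ∫⁻ x in D, 8 ^ k * (ENNReal.ofReal c * (1 + g x)) ^ k ∂μ ≤
      ENNReal.ofReal ((16 * c) ^ k * (V + S)) := by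
  have hadd := lintegral_add_pow_le (μ := μ.restrict D) hg 1 1 k
  simp only [one_mul, one_pow, Measure.restrict_apply_univ] at hadd
  calc ∫⁻ x in D, 8 ^ k * (ENNReal.ofReal c * (1 + g x)) ^ k ∂μ
      = (8 * ENNReal.ofReal c) ^ k * ∫⁻ x in D, (1 + g x) ^ k ∂μ := by
        simp only [← mul_pow, ← mul_assoc]
        simp only [mul_pow _ (1 + g _)]
        exact lintegral_const_mul _ (by fun_prop)
    _ ≤ (8 * ENNReal.ofReal c) ^ k * (2 ^ k * (ENNReal.ofReal V + ENNReal.ofReal S)) := by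
        gcongr
        exact hadd.trans (by gcongr)
    _ = ENNReal.ofReal ((16 * c) ^ k * (V + S)) := by
        rw [← mul_assoc, ← mul_pow, ofReal_mul (by positivity), ofReal_pow (by positivity),
          ofReal_add hV0 hS0, ofReal_mul (by norm_num), ofReal_ofNat]
        ring

/-! ### Separated slope scales -/

lemma card_mul_le_setLIntegral_of_pairwiseDisjoint {α ι : Type*} [MeasurableSpace α]
    {μ : Measure α} {s : Finset ι} {E : ι → Set α} {D : Set α} {F : α → ℝ≥0∞} {c : ℝ≥0∞}
    (hE : ∀ j ∈ s, MeasurableSet (E j)) (hdisj : (s : Set ι).PairwiseDisjoint E)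
    (hED : ∀ j ∈ s, E j ⊆ D) (hc : ∀ j ∈ s, c ≤ ∫⁻ x in E j, F x ∂μ) :
    s.card * c ≤ ∫⁻ x in D, F x ∂μ := by
  calc s.card * c = ∑ _j ∈ s, c := by simp
    _ ≤ ∑ j ∈ s, ∫⁻ x in E j, F x ∂μ := Finset.sum_le_sum hc
    _ = ∫⁻ x in ⋃ j ∈ s, E j, F x ∂μ := (lintegral_biUnion_finset hdisj hE F).symm
    _ ≤ ∫⁻ x in D, F x ∂μ := lintegral_mono_set (iUnion₂_subset hED)

lemma norm_smul_add_mem_Icc {E : Type*} [SeminormedAddCommGroup E] [NormedSpace ℝ E]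
    {u p p₀ : E} {l η C : ℝ} (hl : 0 ≤ l) (hp : p ∈ closedBall (l • p₀) (l * η))
    (hlow : 2 * η ≤ ‖u + p₀‖) (hup : ‖u‖ + ‖p₀‖ + η ≤ C) :
    ‖l • u + p‖ ∈ Icc (l * η) (l * C) := by
  rw [mem_closedBall, dist_eq_norm] at hp
  have hsplit : l • u + p = l • (u + p₀) + (p - l • p₀) := by rw [smul_add]; abel
  have hnorm : ‖l • (u + p₀)‖ = l * ‖u + p₀‖ := by rw [norm_smul, Real.norm_of_nonneg hl]
  have hge : ‖l • (u + p₀)‖ - ‖p - l • p₀‖ ≤ ‖l • u + p‖ := by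
    rw [hsplit]
    exact norm_sub_le_norm_add _ _
  have hle : ‖l • u + p‖ ≤ ‖l • (u + p₀)‖ + ‖p - l • p₀‖ := hsplit ▸ norm_add_le _ _
  have htri := norm_add_le u p₀
  constructor <;> nlinarith

/-- `v` minus the test function `θ t + l φ x`. -/
def sepDiff (v : En n × ℝ → ℝ) (θ : ℝ → ℝ) (φ : En n → ℝ) (l : ℝ) : En n × ℝ → ℝ :=
  fun X => v X - (θ X.2 + l * φ X.1)

/-- The gradient of `v` at a common contact point would have to lie in two disjoint ranges. -/
lemma disjoint_contactSet_sepDiff {v : En n × ℝ → ℝ} {θ : ℝ → ℝ} {φ : En n → ℝ}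
    {pφ : En n → En n} {Hφ : En n → Matrix (Fin n) (Fin n) ℝ} {D : Set (En n)} {I : Set ℝ}
    {p₀ : En n} {l l' η C : ℝ} (hl : 0 ≤ l) (hl' : 0 ≤ l') (hsep : l' * C < l * η)
    (hv : ∀ x ∈ D, ∀ t ∈ I, ∃ p H, HasSecondOrderExpansionAt (fun z => v (z, t)) x p H)
    (hφ : ∀ x ∈ D, HasSecondOrderExpansionAt φ x (pφ x) (Hφ x))
    (hlow : ∀ x ∈ D, 2 * η ≤ ‖pφ x + p₀‖) (hup : ∀ x ∈ D, ‖pφ x‖ + ‖p₀‖ + η ≤ C)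
    (hint : ∀ p ∈ closedBall (l • p₀) (l * η), ∀ x ∈ D, ∀ t ∈ I,
      IsContactPoint (sepDiff v θ φ l) D I p x t → D ∈ nhds x) :
    Disjoint (contactSet (sepDiff v θ φ l) D I (closedBall (l • p₀) (l * η)))
      (contactSet (sepDiff v θ φ l') D I (closedBall (l' • p₀) (l' * η))) := by
  rw [Set.disjoint_left]
  rintro x ⟨hx, t, ht, p, hp, hc⟩ ⟨-, t', ht', p', hp', hc'⟩
  have hDx := hint p hp x hx t ht hc
  obtain ⟨pv, H, hH⟩ := hv x hx t' ht'
  have hct' : IsContactPoint (sepDiff v θ φ l) D I p x t' := by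
    refine hc.of_le ?_
    have hle := hc' x hx t ht
    simp only [sub_self, inner_zero_right, sepDiff] at hle ⊢
    linarith
  have hgrad {k : ℝ} {q : En n} (hk : IsContactPoint (sepDiff v θ φ k) D I q x t') :
      pv = k • pφ x + q := by
    rw [← (hH.sub (((hφ x hx).const_mul k).const_add (θ t'))).eq_of_eventually_le
      (hk.eventually_le hDx ht')]
    abel
  have hge := (norm_smul_add_mem_Icc hl hp (hlow x hx) (hup x hx)).1
  have hle := (norm_smul_add_mem_Icc hl' hp' (hlow x hx) (hup x hx)).2
  rw [← hgrad hct'] at hge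
  rw [← hgrad hc'] at hle
  linarith

namespace IsSupersolution

section Multiscale

variable {ν : ℝ} {g : En n → ℝ≥0∞} {v : En n × ℝ → ℝ} {y : En n} {r t₁ t₂ : ℝ}
  {D : Set (En n)} {θ θ' : ℝ → ℝ} {φ : En n → ℝ} {pφ : En n → En n}
  {Hφ : En n → Matrix (Fin n) (Fin n) ℝ} {p₀ : En n} {η C : ℝ}

lemma continuousOn_sepDiff (hv : IsSupersolution ν g v y r t₁ t₂) (hD : D ⊆ ball y r)
    (hθ : Continuous θ) (hφ : ContinuousOn φ D) (l : ℝ) :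
    ContinuousOn (sepDiff v θ φ l) (D ×ˢ Icc t₁ t₂) := by
  refine (hv.continuousOn.mono (prod_mono hD subset_rfl)).sub (ContinuousOn.add (by fun_prop) ?_)
  exact continuousOn_const.mul (hφ.comp (by fun_prop) fun X hX => hX.1)

lemma ball_le_lintegral_contactSet [NeZero n] (hν : 0 < ν)
    (hv : IsSupersolution ν g v y r t₁ t₂) (hT : t₁ ≤ t₂) (hDc : IsCompact D) (hD0 : D.Nonempty)
    (hD : D ⊆ ball y r) (hθ : ∀ t, HasDerivAt θ (θ' t) t) (hφc : ContinuousOn φ D)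
    (hφ : ∀ x ∈ D, HasSecondOrderExpansionAt φ x (pφ x) (Hφ x)) {l : ℝ} (hl : 0 < l) (hη : 0 < η)
    (hC : 0 < C) (hlow : ∀ x ∈ D, 2 * η ≤ ‖pφ x + p₀‖) (hup : ∀ x ∈ D, ‖pφ x‖ + ‖p₀‖ + η ≤ C)
    (hα : ∀ x ∈ D, ∀ t ∈ Icc t₁ t₂, ∀ a, IsElliptic ν a →
      θ' t - l * contraction a (Hφ x) ≤ l * C)
    (hint : ∀ p ∈ closedBall (l • p₀) (l * η), ∀ x ∈ D, ∀ t ∈ Icc t₁ t₂,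
      IsContactPoint (sepDiff v θ φ l) D (Icc t₁ t₂) p x t → t₁ < t ∧ D ∈ nhds x) :
    ENNReal.ofReal η ^ n * volume (ball (0 : En n) 1) ≤ 8 ^ n *
      ∫⁻ x in contactSet (sepDiff v θ φ l) D (Icc t₁ t₂) (closedBall (l • p₀) (l * η)),
        (ENNReal.ofReal (ν * C) * (1 + g x)) ^ n := by
  have hmeas := hv.measurable_drift
  have hcont := hv.continuousOn_sepDiff hD
    (continuous_iff_continuousAt.2 fun t => (hθ t).continuousAt) hφc l
  have hest := hv.volume_le_lintegral hν (α := l * C) (β := l * C) (by positivity) (by positivity)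
    (ψ := fun X => θ X.2 + l * φ X.1) (A := closedBall (l • p₀) (l * η)) hD
    (isCompact_contactSet hDc isCompact_Icc (isCompact_closedBall (l • p₀) (l * η))
      hcont).measurableSet fun p hp => ?_
  · rw [Measure.addHaar_closedBall _ _ (by positivity), finrank_euclideanSpace, Fintype.card_fin,
      mul_pow, ofReal_mul (by positivity), ofReal_pow hl.le, ofReal_pow hη.le, mul_assoc] at hest
    have hscale (x : En n) : (ENNReal.ofReal ν * (ENNReal.ofReal (l * C) +
        ENNReal.ofReal (l * C) * g x)) ^ n =
        ENNReal.ofReal l ^ n * (ENNReal.ofReal (ν * C) * (1 + g x)) ^ n := by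
      rw [← mul_pow, ofReal_mul hl.le, ofReal_mul hν.le]
      ring
    simp only [hscale] at hest
    rw [lintegral_const_mul _ (by fun_prop), mul_left_comm (8 ^ n)] at hest
    exact (ENNReal.mul_le_mul_iff_right (pow_ne_zero _ (by simpa using hl)) (by finiteness)).1 hest
  · obtain ⟨x, hx, t, ht, hc⟩ := exists_isContactPoint hDc isCompact_Icc hD0
      (nonempty_Icc.2 hT) hcont p
    obtain ⟨ht₁, hDx⟩ := hint p hp x hx t ht hc
    refine ⟨x, ⟨hx, t, ht, p, hp, hc⟩, t, ⟨ht₁, ht.2⟩, hDx, hc, θ' t, l • pφ x, l • Hφ x,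
      (hθ t).add_const (l * φ x), ((hφ x hx).const_mul l).const_add (θ t), fun a ha => ?_,
      (norm_smul_add_mem_Icc hl.le hp (hlow x hx) (hup x hx)).2⟩
    rw [contraction_smul]
    exact hα x hx t ht a ha

/-- The contact sets of the different scales are disjoint and none of them is small. -/
lemma scales_mul_le [NeZero n] (hν : 0 < ν) (hv : IsSupersolution ν g v y r t₁ t₂) (hT : t₁ ≤ t₂)
    (hDc : IsCompact D) (hD0 : D.Nonempty) (hD : D ⊆ ball y r) (hθ : ∀ t, HasDerivAt θ (θ' t) t)
    (hφc : ContinuousOn φ D) (hφ : ∀ x ∈ D, HasSecondOrderExpansionAt φ x (pφ x) (Hφ x))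
    {lam : ℕ → ℝ} {J : ℕ} (hlam : ∀ j < J, 0 < lam j)
    (hsep : ∀ j k, j < k → k < J → lam k * C < lam j * η) (hη : 0 < η)
    (hlow : ∀ x ∈ D, 2 * η ≤ ‖pφ x + p₀‖) (hup : ∀ x ∈ D, ‖pφ x‖ + ‖p₀‖ + η ≤ C)
    (hα : ∀ j < J, ∀ x ∈ D, ∀ t ∈ Icc t₁ t₂, ∀ a, IsElliptic ν a →
      θ' t - lam j * contraction a (Hφ x) ≤ lam j * C)
    (hint : ∀ j < J, ∀ p ∈ closedBall (lam j • p₀) (lam j * η), ∀ x ∈ D, ∀ t ∈ Icc t₁ t₂,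
      IsContactPoint (sepDiff v θ φ (lam j)) D (Icc t₁ t₂) p x t → t₁ < t ∧ D ∈ nhds x)
    {V S : ℝ} (hV : volume D ≤ ENNReal.ofReal V)
    (hS : ∫⁻ x in D, g x ^ n ≤ ENNReal.ofReal S) (hV0 : 0 ≤ V) (hS0 : 0 ≤ S) :
    J * (η ^ n * volume.real (ball (0 : En n) 1)) ≤ (16 * (ν * C)) ^ n * (V + S) := by
  obtain ⟨x₀, hx₀⟩ := hD0
  have hC : 0 < C := by linarith [hup x₀ hx₀, norm_nonneg (pφ x₀), norm_nonneg p₀]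
  set E : ℕ → Set (En n) := fun j => contactSet (sepDiff v θ φ (lam j)) D (Icc t₁ t₂)
    (closedBall (lam j • p₀) (lam j * η))
  have hθc : Continuous θ := continuous_iff_continuousAt.2 fun t => (hθ t).continuousAt
  have hdisj (j k : ℕ) (hjk : j < k) (hk : k < J) : Disjoint (E j) (E k) :=
    disjoint_contactSet_sepDiff (hlam j (hjk.trans hk)).le (hlam k hk).le (hsep j k hjk hk)
      (fun x hx t ht => by
        obtain ⟨-, p, H, -, hH, -⟩ := hv.isSupersolutionAt x (hD hx) t ht
        exact ⟨p, H, hH⟩) hφ hlow hup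
      fun p hp x hx t ht hc => (hint j (hjk.trans hk) p hp x hx t ht hc).2
  have hsum : J * (ENNReal.ofReal η ^ n * volume (ball (0 : En n) 1)) ≤
      ∫⁻ x in D, 8 ^ n * (ENNReal.ofReal (ν * C) * (1 + g x)) ^ n := by
    rw [← Finset.card_range J]
    refine card_mul_le_setLIntegral_of_pairwiseDisjoint (E := E) (fun j _ => (isCompact_contactSet
      hDc isCompact_Icc (isCompact_closedBall _ _)
      (hv.continuousOn_sepDiff hD hθc hφc _)).measurableSet) (fun j hj k hk hjk => ?_)
      (fun j _ x hx => hx.1) fun j hj => ?_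
    · rw [Finset.coe_range] at hj hk
      rcases hjk.lt_or_gt with h | h
      exacts [hdisj j k h hk, (hdisj k j h hj).symm]
    · have hj := Finset.mem_range.1 hj
      rw [lintegral_const_mul' _ _ (by finiteness)]
      exact hv.ball_le_lintegral_contactSet hν hT hDc ⟨x₀, hx₀⟩ hD hθ hφc hφ (hlam j hj) hη hC
        hlow hup (hα j hj) (hint j hj)
  have hbound := hsum.trans (setLIntegral_mul_one_add_pow_le hv.measurable_drift
    (by positivity) hV hS hV0 hS0)
  rw [← ofReal_pow hη.le, ← ofReal_measureReal measure_ball_lt_top.ne, ← ofReal_mul (by positivity),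
    ← ofReal_natCast J, ← ofReal_mul (by positivity)] at hbound
  exact (ofReal_le_ofReal_iff (by positivity)).1 hbound

end Multiscale

end IsSupersolution

/-! ### The minimum principle -/

lemma pow_mul_lt_pow_mul {q C η : ℝ} (hq : 0 < q) (hq1 : q ≤ 1) (hC : 0 ≤ C) (h : q * C < η)
    {j k : ℕ} (hjk : j < k) : q ^ k * C < q ^ j * η := calc
  q ^ k * C ≤ q ^ (j + 1) * C := by
    gcongr ?_ * C
    exact pow_le_pow_of_le_one hq.le hq1 hjk
  _ = q ^ j * (q * C) := by ring
  _ < q ^ j * η := by gcongr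

lemma exists_nat_mul_lt {a : ℝ} (ha : 0 < a) (b : ℝ) : ∃ J : ℕ, b < J * a := by
  obtain ⟨J, hJ⟩ := exists_nat_gt (b / a)
  exact ⟨J, (div_lt_iff₀ ha).1 hJ⟩

lemma HasSecondOrderExpansionAt.zero (x : En n) :
    HasSecondOrderExpansionAt (fun _ => (0 : ℝ)) x 0 0 := by
  simpa using HasSecondOrderExpansionAt.comp_norm_sq (F := fun _ => 0) (F₁ := fun _ => 0) x
    (fun s => hasDerivAt_const s _) (hasDerivAt_const _ _)

lemma volume_real_unitBall_pos : 0 < volume.real (ball (0 : En n) 1) :=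
  toReal_pos (measure_ball_pos _ _ one_pos).ne' measure_ball_lt_top.ne

lemma IsContactPoint.apply_le_add_norm_mul {f : En n × ℝ → ℝ} {D : Set (En n)} {I : Set ℝ}
    {p x z : En n} {t t' : ℝ} (h : IsContactPoint f D I p x t) (hz : z ∈ D) (ht' : t' ∈ I) :
    f (x, t) ≤ f (z, t') + ‖p‖ * dist x z := by
  have hcs := neg_le_of_abs_le (abs_real_inner_le_norm p (z - x))
  rw [← dist_eq_norm, dist_comm] at hcs
  linarith [h z hz t' ht']

lemma IsContactPoint.lt_and_mem_nhds_of_le_parabolicBoundary {f : En n × ℝ → ℝ} {D : Set (En n)}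
    {t₁ t₂ c t t' : ℝ} {p x z : En n} (h : IsContactPoint f D (Icc t₁ t₂) p x t)
    (hD : Bornology.IsBounded D) (hx : x ∈ D) (ht : t ∈ Icc t₁ t₂) (hz : z ∈ D)
    (ht' : t' ∈ Icc t₁ t₂) (hlt : f (z, t') + ‖p‖ * diam D < c) (hbot : ∀ x ∈ D, c ≤ f (x, t₁))
    (hlat : ∀ x ∈ frontier D, ∀ t ∈ Icc t₁ t₂, c ≤ f (x, t)) : t₁ < t ∧ D ∈ nhds x := by
  have hxc : f (x, t) < c := by
    have hdist : ‖p‖ * dist x z ≤ ‖p‖ * diam D := by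
      gcongr
      exact dist_le_diam_of_mem hD hx hz
    linarith [h.apply_le_add_norm_mul hz ht']
  refine ⟨ht.1.lt_of_ne ?_, mem_interior_iff_mem_nhds.1 ?_⟩
  · rintro rfl
    exact (hbot x hx).not_gt hxc
  · by_contra hint
    exact (hlat x ⟨subset_closure hx, hint⟩ t ht).not_gt hxc

/-- A supersolution that dips below its parabolic boundary values by `d` would be touched from below
by affine functions with slopes near `l • p₀` for every `l` of size at most `d / diam D`, hence at
arbitrarily many separated scales. -/
lemma IsSupersolution.le_of_le_parabolicBoundary [NeZero n] {ν : ℝ} {g : En n → ℝ≥0∞}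
    {v : En n × ℝ → ℝ} {y : En n} {r t₁ t₂ c : ℝ} {D : Set (En n)} (hν : 0 < ν)
    (hv : IsSupersolution ν g v y r t₁ t₂) (hDc : IsCompact D) (hD : D ⊆ ball y r)
    (hfin : ∫⁻ x in D, g x ^ n ≠ ∞) (hbot : ∀ x ∈ D, c ≤ v (x, t₁))
    (hlat : ∀ x ∈ frontier D, ∀ t ∈ Icc t₁ t₂, c ≤ v (x, t)) :
    ∀ x ∈ D, ∀ t ∈ Icc t₁ t₂, c ≤ v (x, t) := by
  intro xs hxs ts hts
  by_contra! hlt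
  obtain ⟨d, hd, hdef⟩ : ∃ d : ℝ, 0 < d ∧ v (xs, ts) = c - d :=
    ⟨c - v (xs, ts), by linarith, by ring⟩
  set l : ℝ := d / (2 * (diam D + 1))
  have hdiam : 0 ≤ diam D := diam_nonneg
  have hl : 0 < l := by positivity
  have hld : l * (5 / 4) * diam D < d := by
    rw [div_mul_eq_mul_div, div_mul_eq_mul_div, div_lt_iff₀ (by positivity)]
    nlinarith
  obtain ⟨p₀, hp₀⟩ := exists_norm_eq (En n) zero_le_one
  obtain ⟨J, hJ⟩ := exists_nat_mul_lt (a := (1 / 4) ^ n * volume.real (ball (0 : En n) 1))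
    (mul_pos (by positivity) volume_real_unitBall_pos)
    ((16 * (ν * (5 / 4))) ^ n * (volume.real D + (∫⁻ x in D, g x ^ n).toReal))
  refine hJ.not_ge (hv.scales_mul_le hν (hts.1.trans hts.2) hDc ⟨xs, hxs⟩ hD (p₀ := p₀)
    (fun t => hasDerivAt_const t (0 : ℝ)) continuousOn_const
    (fun x _ => HasSecondOrderExpansionAt.zero x) (lam := fun j => l * (1 / 6) ^ j)
    (fun j _ => by positivity) (fun j k hjk _ => ?_) (by norm_num)
    (fun x _ => by rw [zero_add, hp₀]; norm_num) (fun x _ => by rw [norm_zero, hp₀]; norm_num)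
    (fun j _ x _ t _ a _ => ?_) (fun j _ p hp x hx t ht hc => ?_)
    (ofReal_measureReal hDc.measure_lt_top.ne).ge (ofReal_toReal hfin).ge measureReal_nonneg
    toReal_nonneg)
  · rw [mul_assoc, mul_assoc]
    exact mul_lt_mul_of_pos_left
      (pow_mul_lt_pow_mul (by norm_num) (by norm_num) (by norm_num) (by norm_num) hjk) hl
  · simp only [contraction, mul_zero, Matrix.zero_apply, Finset.sum_const_zero, sub_self]
    positivity
  · have hlj : l * (1 / 6) ^ j ≤ l :=
      mul_le_of_le_one_right hl.le (pow_le_one₀ (by norm_num) (by norm_num))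
    have hp' : ‖p‖ ≤ l * (5 / 4) := by
      have := norm_le_norm_add_const_of_dist_le (mem_closedBall.1 hp)
      rw [norm_smul, hp₀, Real.norm_of_nonneg (by positivity)] at this
      linarith
    have hv_sep : sepDiff v (fun _ => 0) (fun _ => 0) (l * (1 / 6) ^ j) = v := by
      funext X
      simp [sepDiff]
    rw [hv_sep] at hc
    refine hc.lt_and_mem_nhds_of_le_parabolicBoundary hDc.isBounded hx ht hxs hts ?_ hbot hlat
    nlinarith

/-! ### Positivity across an annulus with small drift -/

lemma contraction_radialHessian (a : Matrix (Fin n) (Fin n) ℝ) (x : En n) (F₁ F₂ : ℝ) :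
    contraction a ((4 * F₂) • Matrix.vecMulVec x x + (2 * F₁) • 1) =
      4 * F₂ * quadForm a x + 2 * F₁ * a.trace := by
  rw [contraction_add, contraction_smul, contraction_smul, contraction_vecMulVec_self,
    contraction_one]

/-- The open annulus with centre `z`, outer radius `ρ` and inner radius `ρ / 2`. -/
def annulus (z : En n) (ρ : ℝ) : Set (En n) := {x | ρ / 2 < dist x z ∧ dist x z < ρ}

lemma isOpen_annulus (z : En n) (ρ : ℝ) : IsOpen (annulus z ρ) :=
  (isOpen_lt continuous_const (continuous_id.dist continuous_const)).inter
    (isOpen_lt (continuous_id.dist continuous_const) continuous_const)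

lemma annulus_subset_ball (z : En n) (ρ : ℝ) : annulus z ρ ⊆ ball z ρ := fun _ hx => hx.2

/-- The decay rate that makes `annulusBarrier` a subsolution. -/
def annulusRate (n : ℕ) (ν : ℝ) : ℝ := (8 + (16 + 3 * n) * ν) ^ 2 * ν

/-- The barrier `exp (-λ t) ((1 - |x|²) (|x|² - 1/4))²`, which vanishes on the boundary of the unit
annulus and, for `λ = annulusRate n ν`, is a subsolution of the driftless equation. -/
def annulusBarrier (ν : ℝ) (X : En n × ℝ) : ℝ :=
  Real.exp (-annulusRate n ν * X.2) * ((1 - ‖X.1‖ ^ 2) * (‖X.1‖ ^ 2 - 1 / 4)) ^ 2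

lemma annulusRate_nonneg {ν : ℝ} (hν : 0 ≤ ν) : 0 ≤ annulusRate n ν := by
  unfold annulusRate
  positivity

/-- With `B = (1 - s) (s - 1/4)` the gradient term is `(2 s - 5/4)² = 9/16 - 4 B`, so it is positive
where `B` is small; elsewhere the time derivative, of order `λ B²`, compensates. -/
lemma annulusBarrier_inequality {ν s Q τ N : ℝ} (hν : 1 ≤ ν) (h1 : 1 / 4 ≤ s) (h2 : s ≤ 1)
    (hQ1 : ν⁻¹ * s ≤ Q) (hQ2 : Q ≤ ν * s) (hτ : |τ| ≤ N * ν) :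
    0 ≤ (8 + (16 + 3 * N) * ν) ^ 2 * ν * ((1 - s) * (s - 1 / 4)) ^ 2 +
      (4 * (2 * (5 / 4 - 2 * s) ^ 2 - 4 * ((1 - s) * (s - 1 / 4))) * Q +
        2 * (2 * ((1 - s) * (s - 1 / 4)) * (5 / 4 - 2 * s)) * τ) := by
  obtain ⟨B, hB⟩ : ∃ B, B = (1 - s) * (s - 1 / 4) := ⟨_, rfl⟩
  obtain ⟨d, hd⟩ : ∃ d, d = 5 / 4 - 2 * s := ⟨_, rfl⟩
  obtain ⟨M, hM⟩ : ∃ M, M = 8 + (16 + 3 * N) * ν := ⟨_, rfl⟩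
  have hν0 : 0 < ν := by linarith
  have hinv1 : ν⁻¹ ≤ 1 := inv_le_one_of_one_le₀ hν
  have hB0 : 0 ≤ B := hB ▸ mul_nonneg (by linarith) (by linarith)
  have hd2 : d ^ 2 = 9 / 16 - 4 * B := by rw [hB, hd]; ring
  have hd1 : |d| ≤ 3 / 4 := by rw [abs_le, hd]; constructor <;> linarith
  have hgrad : d ^ 2 * (ν⁻¹ / 4) ≤ d ^ 2 * Q := by
    gcongr
    linarith [mul_le_mul_of_nonneg_left h1 (inv_pos.2 hν0).le]
  have hquad : B * Q ≤ B * ν := by gcongr; nlinarith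
  have htrace : -(B * (3 / 4 * (N * ν))) ≤ B * d * τ := by
    refine neg_le_of_abs_le ?_
    rw [mul_assoc, abs_mul B, abs_mul d, abs_of_nonneg hB0]
    gcongr
  have hsquare : 0 ≤ M ^ 2 * ν * B ^ 2 - M * B + 9 / 8 * ν⁻¹ := by
    have : M ^ 2 * ν * B ^ 2 - M * B + 9 / 8 * ν⁻¹ =
        ν * (M * B - ν⁻¹ / 2) ^ 2 + 7 / 8 * ν⁻¹ := by field_simp; ring
    rw [this]
    positivity
  have hBinv : B * ν⁻¹ ≤ B * 1 := by gcongr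
  have hMB : M * B = 8 * B + 16 * (B * ν) + 3 * (B * (N * ν)) := by rw [hM]; ring
  rw [← hB, ← hd, ← hM, hd2]
  rw [hd2] at hgrad
  nlinarith

section annulusBarrier

variable {ν t : ℝ} {x : En n}

lemma continuous_annulusBarrier (ν : ℝ) : Continuous (annulusBarrier (n := n) ν) := by
  unfold annulusBarrier
  fun_prop

lemma annulusBarrier_eq_zero (ν t : ℝ) (hx : ‖x‖ = 1 / 2 ∨ ‖x‖ = 1) :
    annulusBarrier ν (x, t) = 0 := by
  rcases hx with hx | hx <;> simp only [annulusBarrier, hx] <;> norm_num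

lemma annulusBarrier_zero_le_one (ν : ℝ) (h1 : 1 / 2 ≤ ‖x‖) (h2 : ‖x‖ ≤ 1) :
    annulusBarrier ν (x, 0) ≤ 1 := by
  simp only [annulusBarrier, mul_zero, Real.exp_zero, one_mul]
  exact pow_le_one₀ (mul_nonneg (by nlinarith) (by nlinarith)) (by nlinarith)

/-- A lower bound for `annulusBarrier` on the sphere of radius `3/4` up to time `1`. -/
def annulusLevel (n : ℕ) (ν : ℝ) : ℝ := Real.exp (-annulusRate n ν) * (35 / 256) ^ 2

lemma annulusLevel_pos : 0 < annulusLevel n ν := by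
  unfold annulusLevel
  positivity

lemma annulusLevel_le_one (hν : 0 ≤ ν) : annulusLevel n ν ≤ 1 :=
  mul_le_one₀ (Real.exp_le_one_iff.2 (neg_nonpos.2 (annulusRate_nonneg hν))) (by positivity)
    (by norm_num)

lemma annulusLevel_le_annulusBarrier (hν : 0 ≤ ν) (hx : ‖x‖ = 3 / 4) (ht : t ≤ 1) :
    annulusLevel n ν ≤ annulusBarrier ν (x, t) := by
  have hrate := mul_le_mul_of_nonneg_left ht (annulusRate_nonneg (n := n) hν)
  simp only [annulusLevel, annulusBarrier, hx]
  gcongr ?_ * ?_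
  · exact Real.exp_le_exp.2 (by linarith)
  · norm_num

lemma hasDerivAt_annulusProfile (s : ℝ) :
    HasDerivAt (fun s : ℝ => ((1 - s) * (s - 1 / 4)) ^ 2)
      (2 * ((1 - s) * (s - 1 / 4)) * (5 / 4 - 2 * s)) s := by
  refine ((((hasDerivAt_id s).const_sub 1).mul
    ((hasDerivAt_id s).sub_const (1 / 4))).pow 2).congr_deriv ?_
  simp only [id, Pi.mul_apply]
  ring

lemma hasDerivAt_annulusProfile_deriv (s : ℝ) :
    HasDerivAt (fun s : ℝ => 2 * ((1 - s) * (s - 1 / 4)) * (5 / 4 - 2 * s))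
      (2 * (5 / 4 - 2 * s) ^ 2 - 4 * ((1 - s) * (s - 1 / 4))) s := by
  refine (((((hasDerivAt_id s).const_sub 1).mul
    ((hasDerivAt_id s).sub_const (1 / 4))).const_mul 2).mul
    (((hasDerivAt_id s).const_mul 2).const_sub (5 / 4))).congr_deriv ?_
  simp only [id, Pi.mul_apply]
  ring

lemma exists_subsolution_expansion_annulusBarrier (hν : 1 ≤ ν) (h1 : 1 / 2 ≤ ‖x‖) (h2 : ‖x‖ ≤ 1)
    (ht : 0 ≤ t) : ∃ (q : ℝ) (p : En n) (H : Matrix (Fin n) (Fin n) ℝ),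
      HasDerivAt (fun s => annulusBarrier ν (x, s)) q t ∧
      HasSecondOrderExpansionAt (fun z => annulusBarrier ν (z, t)) x p H ∧
      (∀ a, IsElliptic ν a → q - contraction a H ≤ 0) ∧ ‖p‖ ≤ 3 := by
  have hν0 : 0 ≤ ν := by linarith
  have hexp : Real.exp (-annulusRate n ν * t) ≤ 1 :=
    Real.exp_le_one_iff.2 (by nlinarith [annulusRate_nonneg (n := n) hν0])
  refine ⟨_, _, _, ((hasDerivAt_id' t).const_mul (-annulusRate n ν)).exp.mul_const
      (((1 - ‖x‖ ^ 2) * (‖x‖ ^ 2 - 1 / 4)) ^ 2),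
    (HasSecondOrderExpansionAt.comp_norm_sq x hasDerivAt_annulusProfile
      (hasDerivAt_annulusProfile_deriv _)).const_mul (Real.exp (-annulusRate n ν * t)),
    fun a ha => ?_, ?_⟩
  · have hineq := annulusBarrier_inequality hν (by nlinarith) (by nlinarith) (ha.le_quadForm x)
      (ha.quadForm_le hν0 x) (ha.abs_trace_le hν0)
    rw [contraction_smul, contraction_radialHessian]
    have := mul_nonneg (Real.exp_pos (-annulusRate n ν * t)).le hineq
    simp only [annulusRate] at this ⊢
    linarith
  · have hB0 : 0 ≤ (1 - ‖x‖ ^ 2) * (‖x‖ ^ 2 - 1 / 4) := mul_nonneg (by nlinarith) (by nlinarith)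
    have hB1 : (1 - ‖x‖ ^ 2) * (‖x‖ ^ 2 - 1 / 4) ≤ 1 := by nlinarith
    have hd : |5 / 4 - 2 * ‖x‖ ^ 2| ≤ 3 / 4 := by rw [abs_le]; constructor <;> nlinarith
    rw [norm_smul, norm_smul, Real.norm_of_nonneg (Real.exp_pos _).le, Real.norm_eq_abs, abs_mul,
      abs_mul, abs_mul, abs_two, abs_of_nonneg hB0]
    calc _ ≤ 1 * (2 * (2 * 1 * (3 / 4)) * 1 : ℝ) := by gcongr
      _ = 3 := by norm_num

end annulusBarrier

/-- The closed annulus with centre `0`, inner radius `r₁` and outer radius `r₂`. -/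
def closedAnnulus (n : ℕ) (r₁ r₂ : ℝ) : Set (En n) := {x | r₁ ≤ ‖x‖ ∧ ‖x‖ ≤ r₂}

lemma isCompact_closedAnnulus (r₁ r₂ : ℝ) : IsCompact (closedAnnulus n r₁ r₂) :=
  (isCompact_closedBall (0 : En n) r₂).of_isClosed_subset
    ((isClosed_le continuous_const continuous_norm).inter
      (isClosed_le continuous_norm continuous_const)) fun _ hx => mem_closedBall_zero_iff.2 hx.2

lemma closedAnnulus_subset_ball {r₁ r₂ R : ℝ} (hR : r₂ < R) : closedAnnulus n r₁ r₂ ⊆ ball 0 R :=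
  fun _ hx => mem_ball_zero_iff.2 (hx.2.trans_lt hR)

lemma closedAnnulus_mem_nhds {r₁ r₂ : ℝ} {x : En n} (h₁ : r₁ < ‖x‖) (h₂ : ‖x‖ < r₂) :
    closedAnnulus n r₁ r₂ ∈ nhds x := by
  filter_upwards [continuous_norm.continuousAt.eventually (lt_mem_nhds h₁),
    continuous_norm.continuousAt.eventually (gt_mem_nhds h₂)] with z hz₁ hz₂
  exact ⟨hz₁.le, hz₂.le⟩

section

variable {ν T : ℝ} {g : En n → ℝ≥0∞} {v : En n × ℝ → ℝ} {p x z : En n} {s t : ℝ}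

lemma IsContactPoint.mem_annulus (hν : 0 ≤ ν) (hT : T ≤ 1) (hv : IsSupersolution ν g v 0 2 0 T)
    (hbot : ∀ x ∈ ball (0 : En n) 1, 1 ≤ v (x, 0))
    (hc : IsContactPoint (fun X => v X - annulusBarrier ν X) (closedAnnulus n (1 / 2) 1) (Icc 0 T)
      p x t)
    (hp : ‖p‖ ≤ annulusLevel n ν / 8) (hx : x ∈ closedAnnulus n (1 / 2) 1) (ht : t ∈ Icc 0 T)
    (hz : ‖z‖ = 3 / 4) (hs : s ∈ Icc 0 T) (hlt : v (z, s) < annulusLevel n ν / 2) :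
    x ∈ annulus 0 1 ∧ 0 < t := by
  have hzD : z ∈ closedAnnulus n (1 / 2) 1 := by constructor <;> rw [hz] <;> norm_num
  have hneg : v (x, t) < annulusBarrier ν (x, t) := by
    have hle := hc.apply_le_add_norm_mul hzD hs
    have hdist : dist x z ≤ 2 := by
      rw [dist_eq_norm]
      linarith [norm_sub_le x z, hx.2]
    have hpos := annulusLevel_pos (n := n) (ν := ν)
    have := mul_le_mul hp hdist dist_nonneg (by linarith)
    linarith [annulusLevel_le_annulusBarrier hν hz (hs.2.trans hT)]
  have hvx := hv.nonneg x (closedAnnulus_subset_ball _root_.one_lt_two hx) t ht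
  have hne : ‖x‖ ≠ 1 / 2 ∧ ‖x‖ ≠ 1 := by
    rw [← not_or]
    intro h
    rw [annulusBarrier_eq_zero ν t h] at hneg
    exact hneg.not_ge hvx
  have hx1 : ‖x‖ < 1 := hx.2.lt_of_ne hne.2
  refine ⟨?_, ht.1.lt_of_ne ?_⟩
  · rw [annulus, mem_ofPred_eq, dist_zero_right]
    exact ⟨hx.1.lt_of_ne' hne.1, hx1⟩
  · rintro rfl
    linarith [hbot x (mem_ball_zero_iff.2 hx1), annulusBarrier_zero_le_one ν hx.1 hx.2]

lemma IsSupersolution.volume_closedBall_le_of_lt [NeZero n] (hν : 1 ≤ ν) (hT : T ≤ 1)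
    (hv : IsSupersolution ν g v 0 2 0 T) (hbot : ∀ x ∈ ball (0 : En n) 1, 1 ≤ v (x, 0))
    (hz : ‖z‖ = 3 / 4) (hs : s ∈ Icc 0 T) (hlt : v (z, s) < annulusLevel n ν / 2) {α : ℝ}
    (hα : 0 < α) :
    volume (closedBall (0 : En n) (annulusLevel n ν / 8)) ≤ 8 ^ n * ∫⁻ x in annulus 0 1,
      (ENNReal.ofReal ν * (ENNReal.ofReal α + ENNReal.ofReal 4 * g x)) ^ n := by
  have hν0 : 0 < ν := by linarith
  have hzD : z ∈ closedAnnulus n (1 / 2) 1 := by constructor <;> rw [hz] <;> norm_num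
  have hD : closedAnnulus n (1 / 2) 1 ⊆ ball 0 2 := closedAnnulus_subset_ball _root_.one_lt_two
  refine hv.volume_le_lintegral hν0 hα (by norm_num) hD
    (isOpen_annulus _ _).measurableSet (ψ := annulusBarrier ν) fun p hp => ?_
  rw [mem_closedBall_zero_iff] at hp
  obtain ⟨x, hx, t, ht, hc⟩ := exists_isContactPoint (isCompact_closedAnnulus _ _) isCompact_Icc
    ⟨z, hzD⟩ ⟨s, hs⟩ ((hv.continuousOn.mono (prod_mono hD subset_rfl)).sub
      (continuous_annulusBarrier ν).continuousOn) p
  obtain ⟨hxA, ht0⟩ := hc.mem_annulus hν0.le hT hv hbot hp hx ht hz hs hlt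
  have hxn := hxA
  rw [annulus, mem_ofPred_eq, dist_zero_right] at hxn
  obtain ⟨q, pψ, H, hq, hH, ha, hpψ⟩ :=
    exists_subsolution_expansion_annulusBarrier hν hx.1 hx.2 ht.1
  refine ⟨x, hxA, t, ⟨ht0, ht.2⟩, closedAnnulus_mem_nhds hxn.1 hxn.2, hc, q, pψ, H, hq, hH,
    fun a h => (ha a h).trans hα.le, ?_⟩
  linarith [norm_add_le pψ p, annulusLevel_le_one (n := n) hν0.le]

end

/-- The drift mass in an annulus below which it does not spoil the contact estimate for
`annulusBarrier`. -/
def annulusDriftBound (n : ℕ) (ν : ℝ) : ℝ :=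
  (annulusLevel n ν / 8 / (64 * ν)) ^ n * volume.real (ball (0 : En n) 1) / 4

lemma annulusDriftBound_pos {ν : ℝ} (hν : 0 < ν) : 0 < annulusDriftBound n ν := by
  have h₁ := annulusLevel_pos (n := n) (ν := ν)
  have h₂ := volume_real_unitBall_pos (n := n)
  unfold annulusDriftBound
  positivity

lemma annulusDriftBound_identity {ν : ℝ} (hν : ν ≠ 0) (η w : ℝ) :
    (8 * ν) ^ n * (2 ^ n * ((η / (64 * ν)) ^ n * w + 4 ^ n * ((η / (64 * ν)) ^ n * w / 4))) =
      ((1 / 4) ^ n + 1 / 4) * (η ^ n * w) := by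
  have h_const : (8 * ν) ^ n * (2 ^ n * (η / (64 * ν)) ^ n) = (1 / 4) ^ n * η ^ n := by
    simp only [← mul_pow]
    congr 1
    field_simp
    ring
  have h_drift : (8 * ν) ^ n * (2 ^ n * (4 ^ n * (η / (64 * ν)) ^ n)) = η ^ n := by
    simp only [← mul_pow]
    congr 1
    field_simp
    ring
  linear_combination w * h_const + w / 4 * h_drift

lemma lintegral_annulus_lt_volume_closedBall [NeZero n] {ν : ℝ} (hν : 0 < ν) {g : En n → ℝ≥0∞}
    (hg : Measurable g)
    (hgn : ∫⁻ x in annulus 0 1, g x ^ n ≤ ENNReal.ofReal (annulusDriftBound n ν)) :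
    8 ^ n * ∫⁻ x in annulus 0 1, (ENNReal.ofReal ν *
        (ENNReal.ofReal (annulusLevel n ν / 8 / (64 * ν)) + ENNReal.ofReal 4 * g x)) ^ n <
      volume (closedBall (0 : En n) (annulusLevel n ν / 8)) := by
  have hη : 0 < annulusLevel n ν / 8 := by linarith [annulusLevel_pos (n := n) (ν := ν)]
  unfold annulusDriftBound at hgn
  generalize annulusLevel n ν / 8 = η at hη hgn ⊢
  have hw := volume_real_unitBall_pos (n := n)
  set w := volume.real (ball (0 : En n) 1)
  have hball : volume (ball (0 : En n) 1) = ENNReal.ofReal w :=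
    (ofReal_measureReal measure_ball_lt_top.ne).symm
  have hα : 0 < η / (64 * ν) := by positivity
  have hquarter : ((1 : ℝ) / 4) ^ n ≤ 1 / 4 :=
    pow_le_of_le_one (by norm_num) (by norm_num) (NeZero.ne n)
  calc _ = (8 * ENNReal.ofReal ν) ^ n * ∫⁻ x in annulus 0 1,
          (ENNReal.ofReal (η / (64 * ν)) + ENNReal.ofReal 4 * g x) ^ n := by
        simp only [mul_pow, mul_assoc]
        rw [lintegral_const_mul _ (by fun_prop)]
    _ ≤ (8 * ENNReal.ofReal ν) ^ n * (2 ^ n * (ENNReal.ofReal (η / (64 * ν)) ^ n *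
          ENNReal.ofReal w + ENNReal.ofReal 4 ^ n *
            ENNReal.ofReal ((η / (64 * ν)) ^ n * w / 4))) := by
        grw [lintegral_add_pow_le hg, Measure.restrict_apply_univ, hgn,
          annulus_subset_ball, hball]
    _ = ENNReal.ofReal (((1 / 4) ^ n + 1 / 4) * (η ^ n * w)) := by
        rw [← ofReal_ofNat 8, ← ofReal_ofNat 2, ← ofReal_mul (by positivity), ← ofReal_pow hα.le,
          ← ofReal_pow (by positivity), ← ofReal_pow (by positivity), ← ofReal_pow (by positivity),
          ← ofReal_mul (by positivity), ← ofReal_mul (by positivity),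
          ← ofReal_add (by positivity) (by positivity), ← ofReal_mul (by positivity),
          ← ofReal_mul (by positivity)]
        rw [annulusDriftBound_identity hν.ne']
    _ < ENNReal.ofReal (η ^ n * w) := by
        have : 0 < η ^ n * w := by positivity
        exact (ofReal_lt_ofReal_iff this).2 (by nlinarith)
    _ = volume (closedBall (0 : En n) η) := by
        rw [Measure.addHaar_closedBall _ _ hη.le, hball, ofReal_mul (by positivity),
          finrank_euclideanSpace, Fintype.card_fin]

lemma IsSupersolution.annulusLevel_div_two_le [NeZero n] {ν T : ℝ} (hν : 1 ≤ ν)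
    {g : En n → ℝ≥0∞} {v : En n × ℝ → ℝ} (hT : T ≤ 1) (hv : IsSupersolution ν g v 0 2 0 T)
    (hbot : ∀ x ∈ ball (0 : En n) 1, 1 ≤ v (x, 0))
    (hgn : ∫⁻ x in annulus 0 1, g x ^ n ≤ ENNReal.ofReal (annulusDriftBound n ν)) {x : En n}
    (hx : ‖x‖ = 3 / 4) {t : ℝ} (ht : t ∈ Icc 0 T) : annulusLevel n ν / 2 ≤ v (x, t) := by
  by_contra! hlt
  have hν0 : 0 < ν := by linarith
  have hα : 0 < annulusLevel n ν / 8 / (64 * ν) :=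
    div_pos (div_pos annulusLevel_pos (by norm_num)) (by positivity)
  exact (lintegral_annulus_lt_volume_closedBall hν0 hv.measurable_drift hgn).not_ge
    (hv.volume_closedBall_le_of_lt hν hT hbot hx ht hlt hα)

/-! ### Local positivity -/

lemma dist_add_smul_self (z x : En n) {ρ : ℝ} (hρ : 0 ≤ ρ) : dist (z + ρ • x) z = ρ * ‖x‖ := by
  rw [dist_eq_norm, add_sub_cancel_left, norm_smul, Real.norm_of_nonneg hρ]

lemma preimage_add_smul_ball (z : En n) {ρ : ℝ} (hρ : 0 < ρ) (R : ℝ) :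
    (fun x => z + ρ • x) ⁻¹' ball z (R * ρ) = ball 0 R := by
  ext x
  rw [mem_preimage, mem_ball, dist_add_smul_self z x hρ.le, mem_ball_zero_iff, mul_comm R,
    mul_lt_mul_iff_right₀ hρ]

lemma preimage_add_smul_annulus (z : En n) {ρ : ℝ} (hρ : 0 < ρ) :
    (fun x => z + ρ • x) ⁻¹' annulus z ρ = annulus 0 1 := by
  ext x
  simp only [annulus, mem_preimage, mem_ofPred_eq, dist_add_smul_self z x hρ.le, dist_zero_right]
  rw [div_eq_mul_one_div, mul_lt_mul_iff_right₀ hρ, mul_lt_iff_lt_one_right hρ]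

section

variable {ν ρ m τ τ' : ℝ} {g : En n → ℝ≥0∞} {v : En n × ℝ → ℝ} {z : En n}

lemma IsSupersolution.normalize {R c : ℝ} (hv : IsSupersolution ν g v z (R * ρ) τ τ')
    (hρ : 0 < ρ) (hc : 0 < c) :
    IsSupersolution ν (fun x => ENNReal.ofReal ρ * g (z + ρ • x))
      (fun X => c * v (z + ρ • X.1, τ + ρ ^ 2 * X.2)) 0 R 0 ((τ' - τ) / ρ ^ 2) := by
  refine hv.rescale hρ hc z τ (fun x hx => ?_) fun t ht => ?_
  · rwa [← preimage_add_smul_ball z hρ R] at hx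
  · have ht' := (le_div_iff₀ (by positivity)).1 ht.2
    have := mul_nonneg (sq_nonneg ρ) ht.1
    constructor <;> linarith

lemma IsSupersolution.annulusLevel_div_two_le_center [NeZero n] {T : ℝ} (hν : 1 ≤ ν) (hT : T ≤ 1)
    (hv : IsSupersolution ν g v 0 2 0 T) (hbot : ∀ x ∈ ball (0 : En n) 1, 1 ≤ v (x, 0))
    (hfin : ∫⁻ x in ball 0 2, g x ^ n ≠ ∞)
    (hgn : ∫⁻ x in annulus 0 1, g x ^ n ≤ ENNReal.ofReal (annulusDriftBound n ν))
    {t : ℝ} (ht : t ∈ Icc 0 T) : annulusLevel n ν / 2 ≤ v (0, t) := by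
  have hν0 : 0 < ν := by linarith
  have hsub : closedBall (0 : En n) (3 / 4) ⊆ ball 0 2 := closedBall_subset_ball (by norm_num)
  refine hv.le_of_le_parabolicBoundary hν0 (isCompact_closedBall 0 (3 / 4)) hsub
    (ne_top_of_le_ne_top hfin (lintegral_mono_set hsub)) (fun x hx => ?_) (fun x hx t ht => ?_) 0
    (mem_closedBall_self (by norm_num)) t ht
  · have := hbot x (closedBall_subset_ball (by norm_num) hx)
    linarith [annulusLevel_le_one (n := n) hν0.le]
  · rw [frontier_closedBall _ (by norm_num)] at hx
    exact hv.annulusLevel_div_two_le hν hT hbot hgn (mem_sphere_zero_iff_norm.1 hx) ht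

lemma IsSupersolution.annulusLevel_mul_le_center [NeZero n] (hν : 1 ≤ ν) (hρ : 0 < ρ) (hm : 0 ≤ m)
    (hv : IsSupersolution ν g v z (2 * ρ) τ τ') (hτ : τ' ≤ τ + ρ ^ 2)
    (hbot : ∀ x ∈ ball z ρ, m ≤ v (x, τ)) (hfin : ∫⁻ x in ball z (2 * ρ), g x ^ n ≠ ∞)
    (hgn : ∫⁻ x in annulus z ρ, g x ^ n ≤ ENNReal.ofReal (annulusDriftBound n ν))
    {t : ℝ} (ht : t ∈ Icc τ τ') : annulusLevel n ν / 2 * m ≤ v (z, t) := by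
  rcases hm.eq_or_lt with rfl | hm
  · simpa using hv.nonneg z (mem_ball_self (by positivity)) t ht
  have hn := (hv.normalize hρ (inv_pos.2 hm)).annulusLevel_div_two_le_center (n := n)
    (t := (t - τ) / ρ ^ 2) hν ((div_le_one (by positivity)).2 (by linarith)) (fun x hx => ?_) ?_ ?_
    ⟨div_nonneg (by linarith [ht.1]) (sq_nonneg ρ), by gcongr; exact ht.2⟩
  · rw [smul_zero, add_zero, mul_div_cancel₀ _ (by positivity), add_sub_cancel, inv_mul_eq_div,
      le_div_iff₀ hm] at hn
    exact hn
  · rw [mul_zero, add_zero, inv_mul_eq_div, one_le_div hm]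
    refine hbot _ ?_
    rwa [← preimage_add_smul_ball z hρ 1, one_mul] at hx
  · rwa [← preimage_add_smul_ball z hρ 2, setLIntegral_rescale_pow hv.measurable_drift hρ z
      measurableSet_ball]
  · rwa [← preimage_add_smul_annulus z hρ, setLIntegral_rescale_pow hv.measurable_drift hρ z
      (isOpen_annulus z ρ).measurableSet]

end

lemma pairwise_disjoint_annulus (z : En n) {ρ : ℝ} (hρ : 0 ≤ ρ) :
    Pairwise (Function.onFun Disjoint fun k : ℕ => annulus z (ρ / 2 ^ k)) := by
  refine (pairwise_disjoint_on _).2 fun j k hjk => Set.disjoint_left.2 fun x hj hk => ?_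
  have hle : ρ / 2 ^ k ≤ ρ / 2 ^ j / 2 := by
    rw [div_div, ← pow_succ]
    exact div_le_div_of_nonneg_left hρ (by positivity) (pow_le_pow_right₀ (by norm_num) hjk)
  exact lt_asymm (hk.2.trans_le hle) hj.1

lemma exists_setLIntegral_annulus_le {F : En n → ℝ≥0∞} {z : En n} {ρ δ S : ℝ} {N : ℕ} (hρ : 0 ≤ ρ)
    (hS : 0 ≤ S) (hN : S < N * δ) (hF : ∫⁻ x in ball z ρ, F x ≤ ENNReal.ofReal S) :
    ∃ k < N, ∫⁻ x in annulus z (ρ / 2 ^ k), F x ≤ ENNReal.ofReal δ := by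
  by_contra! hlt
  have hsum := (card_mul_le_setLIntegral_of_pairwiseDisjoint (s := Finset.range N)
    (fun k _ => (isOpen_annulus z (ρ / 2 ^ k)).measurableSet)
    ((pairwise_disjoint_annulus z hρ).set_pairwise _)
    (fun k _ => (annulus_subset_ball _ _).trans
      (ball_subset_ball (div_le_self hρ (one_le_pow₀ (by norm_num)))))
    fun k hk => (hlt k (Finset.mem_range.1 hk)).le).trans hF
  rw [Finset.card_range, ← ofReal_natCast, ← ofReal_mul (by positivity),
    ofReal_le_ofReal_iff hS] at hsum
  exact hsum.not_gt hN

/-- Among sufficiently many dyadic annuli around a point, one carries little drift. -/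
lemma exists_local_positivity [NeZero n] {ν S : ℝ} (hν : 1 ≤ ν) (hS : 0 ≤ S) :
    ∃ c κ : ℝ, 0 < c ∧ c ≤ 1 ∧ 0 < κ ∧ κ ≤ 1 ∧
      ∀ (g : En n → ℝ≥0∞) (v : En n × ℝ → ℝ) (z : En n) (ρ m τ τ' : ℝ), 0 < ρ → 0 ≤ m →
        τ' ≤ τ + κ * ρ ^ 2 → IsSupersolution ν g v z (2 * ρ) τ τ' →
        ∫⁻ x in ball z (2 * ρ), g x ^ n ≤ ENNReal.ofReal S → (∀ x ∈ ball z ρ, m ≤ v (x, τ)) →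
        ∀ x ∈ closedBall z (ρ / 2), ∀ t ∈ Icc τ τ', c * m ≤ v (x, t) := by
  have hν0 : 0 < ν := by linarith
  obtain ⟨N, hN⟩ := exists_nat_mul_lt (annulusDriftBound_pos (n := n) hν0) S
  refine ⟨annulusLevel n ν / 2, (1 / 4) ^ N, half_pos annulusLevel_pos,
    by linarith [annulusLevel_le_one (n := n) hν0.le], by positivity,
    pow_le_one₀ (by norm_num) (by norm_num),
    fun g v z ρ m τ τ' hρ hm hτ hv hg hbot x hx t ht => ?_⟩
  rw [mem_closedBall] at hx
  obtain ⟨k, hk, hgk⟩ := exists_setLIntegral_annulus_le (z := x) (ρ := ρ / 2) (by positivity) hS hN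
    ((lintegral_mono_set (ball_subset_ball' (by linarith))).trans hg)
  have hkρ : ρ / 2 / 2 ^ k ≤ ρ / 2 := div_le_self (by positivity) (one_le_pow₀ (by norm_num))
  have hsub : ball x (2 * (ρ / 2 / 2 ^ k)) ⊆ ball z (2 * ρ) := ball_subset_ball' (by linarith)
  have hτk : (1 / 4) ^ N * ρ ^ 2 ≤ (ρ / 2 / 2 ^ k) ^ 2 := by
    have hpow : ((1 : ℝ) / 4) ^ N ≤ (1 / 4) ^ (k + 1) :=
      pow_le_pow_of_le_one (by norm_num) (by norm_num) hk
    calc (1 / 4) ^ N * ρ ^ 2 ≤ (1 / 4) ^ (k + 1) * ρ ^ 2 := by gcongr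
      _ = (ρ / 2 / 2 ^ k) ^ 2 := by
        rw [pow_succ, show (1 / 4 : ℝ) = (1 / 2) ^ 2 by norm_num, ← pow_mul, mul_comm 2, pow_mul,
          one_div_pow]
        ring
  exact (hv.mono hsub le_rfl le_rfl).annulusLevel_mul_le_center hν (by positivity) hm
    (by linarith) (fun w hw => hbot w (ball_subset_ball' (by linarith) hw))
    (ne_top_of_le_ne_top ofReal_ne_top ((lintegral_mono_set hsub).trans hg)) hgk ht

/-! ### Spreading of positivity -/

/-- The barrier `exp (-m |x|²) - exp (-16 m)`, which vanishes on the sphere of radius `4` and, for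
large `m`, is a stationary subsolution of the driftless equation outside the unit ball. -/
def gaussianBarrier (m : ℝ) (x : En n) : ℝ := Real.exp (-m * ‖x‖ ^ 2) - Real.exp (-m * 16)

section gaussianBarrier

variable {m : ℝ} {x : En n}

lemma continuous_gaussianBarrier (m : ℝ) : Continuous (gaussianBarrier (n := n) m) := by
  unfold gaussianBarrier
  fun_prop

lemma gaussianBarrier_eq_zero (m : ℝ) (hx : ‖x‖ = 4) : gaussianBarrier m x = 0 := by
  norm_num [gaussianBarrier, hx]

lemma exp_le_exp_neg_mul_sq (hm : 0 ≤ m) (hx : ‖x‖ ≤ 4) :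
    Real.exp (-m * 16) ≤ Real.exp (-m * ‖x‖ ^ 2) :=
  Real.exp_le_exp.2 (mul_le_mul_of_nonpos_left (by nlinarith [norm_nonneg x]) (by linarith))

lemma exp_neg_mul_sq_le_one (hm : 0 ≤ m) (x : En n) : Real.exp (-m * ‖x‖ ^ 2) ≤ 1 :=
  Real.exp_le_one_iff.2 (by nlinarith [sq_nonneg ‖x‖])

lemma gaussianBarrier_le_one (hm : 0 ≤ m) (x : En n) : gaussianBarrier m x ≤ 1 := by
  unfold gaussianBarrier
  linarith [exp_neg_mul_sq_le_one hm x, Real.exp_pos (-m * 16)]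

lemma exp_le_gaussianBarrier (hm : 1 ≤ m) (hx : ‖x‖ ≤ 3) :
    Real.exp (-m * 16) ≤ gaussianBarrier m x := by
  have h₁ : Real.exp (-m * 9) ≤ Real.exp (-m * ‖x‖ ^ 2) :=
    Real.exp_le_exp.2 (mul_le_mul_of_nonpos_left (by nlinarith [norm_nonneg x]) (by linarith))
  have h₂ : Real.exp (-m * 9) = Real.exp (7 * m) * Real.exp (-m * 16) := by
    rw [← Real.exp_add]
    ring_nf
  have h₃ : 2 ≤ Real.exp (7 * m) := by linarith [Real.add_one_le_exp (7 * m)]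
  unfold gaussianBarrier
  nlinarith [Real.exp_pos (-m * 16)]

lemma hasDerivAt_exp_neg_mul (m s : ℝ) :
    HasDerivAt (fun s => Real.exp (-m * s)) (-m * Real.exp (-m * s)) s :=
  ((hasDerivAt_id' s).const_mul (-m)).exp.congr_deriv (by ring)

lemma hasSecondOrderExpansionAt_gaussianBarrier (m : ℝ) (x : En n) :
    HasSecondOrderExpansionAt (gaussianBarrier m) x ((2 * (-m * Real.exp (-m * ‖x‖ ^ 2))) • x)
      ((4 * (-m * (-m * Real.exp (-m * ‖x‖ ^ 2)))) • Matrix.vecMulVec x x +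
        (2 * (-m * Real.exp (-m * ‖x‖ ^ 2))) • 1) :=
  HasSecondOrderExpansionAt.comp_norm_sq x
    (fun s => (hasDerivAt_exp_neg_mul m s).sub_const (Real.exp (-m * 16)))
    ((hasDerivAt_exp_neg_mul m _).const_mul (-m))

lemma norm_gradient_gaussianBarrier (hm : 0 ≤ m) (x : En n) :
    ‖(2 * (-m * Real.exp (-m * ‖x‖ ^ 2))) • x‖ = 2 * m * Real.exp (-m * ‖x‖ ^ 2) * ‖x‖ := by
  rw [norm_smul, neg_mul, mul_neg, norm_neg, Real.norm_of_nonneg (by positivity), neg_mul]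
  ring

lemma contraction_hessian_gaussianBarrier_nonneg {ν : ℝ} {a : Matrix (Fin n) (Fin n) ℝ}
    (ha : IsElliptic ν a) (hν : 0 < ν) (hm : n * ν ^ 2 ≤ m) (hx : 1 ≤ ‖x‖) :
    0 ≤ contraction a ((4 * (-m * (-m * Real.exp (-m * ‖x‖ ^ 2)))) • Matrix.vecMulVec x x +
      (2 * (-m * Real.exp (-m * ‖x‖ ^ 2))) • 1) := by
  have hm0 : 0 ≤ m := le_trans (by positivity) hm
  have hquad : m * ν⁻¹ ≤ m * quadForm a x := by
    gcongr
    exact (le_mul_of_one_le_right (by positivity) (one_le_pow₀ hx)).trans (ha.le_quadForm x)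
  have htrace : a.trace ≤ m * ν⁻¹ := by
    rw [← div_eq_mul_inv, le_div_iff₀ hν]
    nlinarith [(abs_le.1 (ha.abs_trace_le hν.le)).2]
  have hpos : 0 ≤ m * ν⁻¹ := by positivity
  calc 0 ≤ 2 * m * Real.exp (-m * ‖x‖ ^ 2) * (2 * (m * quadForm a x) - a.trace) := by
        have : 0 ≤ 2 * (m * quadForm a x) - a.trace := by linarith
        positivity
    _ = _ := by
        rw [contraction_radialHessian]
        ring

end gaussianBarrier

section

variable {ν m κ l : ℝ} {g : En n → ℝ≥0∞} {v : En n × ℝ → ℝ} {p x z : En n} {t : ℝ}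

lemma IsContactPoint.pos_and_closedAnnulus_mem_nhds (hm : 1 ≤ m) (hκ : 0 < κ) (hκl : κ ≤ l)
    (hl : l ≤ 1) (hv : IsSupersolution ν g v 0 5 0 κ⁻¹)
    (hball : ∀ x ∈ closedBall (0 : En n) 1, ∀ t ∈ Icc 0 κ⁻¹, 1 ≤ v (x, t))
    (hz₁ : 1 ≤ ‖z‖) (hz₃ : ‖z‖ ≤ 3) (hlt : v (z, κ⁻¹) < κ * Real.exp (-m * 16) / 4)
    (hp : ‖p‖ ≤ l * (Real.exp (-m * 16) / 16))
    (hc : IsContactPoint (sepDiff v (fun t => κ * t - 1) (gaussianBarrier m) l)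
      (closedAnnulus n 1 4) (Icc 0 κ⁻¹) p x t)
    (hx : x ∈ closedAnnulus n 1 4) (ht : t ∈ Icc 0 κ⁻¹) :
    0 < t ∧ closedAnnulus n 1 4 ∈ nhds x := by
  have hl₀ : 0 < l := hκ.trans_le hκl
  have hκt : κ * t ≤ 1 := (mul_le_mul_of_nonneg_left ht.2 hκ.le).trans_eq (mul_inv_cancel₀ hκ.ne')
  have hneg : v (x, t) < κ * t - 1 + l * gaussianBarrier m x := by
    have hle := hc.apply_le_add_norm_mul ⟨hz₁, hz₃.trans (by norm_num)⟩ ⟨ht.1.trans ht.2, le_rfl⟩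
    have hdist : dist x z ≤ 7 := by
      rw [dist_eq_norm]
      linarith [norm_sub_le x z, hx.2]
    have hpd := mul_le_mul hp hdist dist_nonneg (by positivity)
    have hzφ : l * Real.exp (-m * 16) ≤ l * gaussianBarrier m z := by
      gcongr
      exact exp_le_gaussianBarrier hm hz₃
    have hκE : κ * Real.exp (-m * 16) ≤ l * Real.exp (-m * 16) := by gcongr
    have hlE : 0 < l * Real.exp (-m * 16) := by positivity
    simp only [sepDiff, mul_inv_cancel₀ hκ.ne'] at hle
    linarith
  have hφ : l * gaussianBarrier m x ≤ 1 := by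
    nlinarith [gaussianBarrier_le_one (zero_le_one.trans hm) x]
  have hvx := hv.nonneg x (closedAnnulus_subset_ball (by norm_num) hx) t ht
  refine ⟨ht.1.lt_of_ne ?_, closedAnnulus_mem_nhds (hx.1.lt_of_ne ?_) (hx.2.lt_of_ne ?_)⟩
  · rintro rfl
    linarith
  · intro h
    linarith [hball x (mem_closedBall_zero_iff.2 h.ge) t ht]
  · intro h
    rw [gaussianBarrier_eq_zero m h] at hneg
    linarith

/-- The barriers `q ^ J * t - 1 + q ^ j * gaussianBarrier m x`, `j < J`, touch the supersolution
from below with gradients of well separated sizes. -/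
lemma IsSupersolution.scales_mul_le_of_lt_exp [NeZero n] (hν : 0 < ν) (hmν : n * ν ^ 2 ≤ m)
    (hm : 1 ≤ m) {q S : ℝ} {J : ℕ} (hq : 0 < q) (hq₁ : q ≤ 1)
    (hqC : q * (8 * m + 1) < Real.exp (-m * 16) / 16)
    (hv : IsSupersolution ν g v 0 5 0 (q ^ J)⁻¹)
    (hball : ∀ x ∈ closedBall (0 : En n) 1, ∀ t ∈ Icc 0 (q ^ J)⁻¹, 1 ≤ v (x, t)) (hS : 0 ≤ S)
    (hg : ∫⁻ x in ball (0 : En n) 5, g x ^ n ≤ ENNReal.ofReal S)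
    (hz₁ : 1 ≤ ‖z‖) (hz₃ : ‖z‖ ≤ 3)
    (hlt : v (z, (q ^ J)⁻¹) < q ^ J * Real.exp (-m * 16) / 4) :
    J * ((Real.exp (-m * 16) / 16) ^ n * volume.real (ball (0 : En n) 1)) ≤
      (16 * (ν * (8 * m + 1))) ^ n * (volume.real (closedAnnulus n 1 4) + S) := by
  have hm0 : 0 ≤ m := zero_le_one.trans hm
  have hE := Real.exp_pos (-m * 16)
  have hE₁ : Real.exp (-m * 16) ≤ 1 := Real.exp_le_one_iff.2 (by linarith)
  have hD : closedAnnulus n 1 4 ⊆ ball 0 5 := closedAnnulus_subset_ball (by norm_num)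
  have hDc : IsCompact (closedAnnulus n 1 4) := isCompact_closedAnnulus 1 4
  refine hv.scales_mul_le hν (by positivity) hDc ⟨z, hz₁, hz₃.trans (by norm_num)⟩ hD (p₀ := 0)
    (θ := fun t => q ^ J * t - 1) (θ' := fun _ => q ^ J)
    (fun t => (((hasDerivAt_id' t).const_mul (q ^ J)).sub_const 1).congr_deriv (mul_one _))
    (continuous_gaussianBarrier m).continuousOn
    (fun x _ => hasSecondOrderExpansionAt_gaussianBarrier m x) (lam := fun j => q ^ j)
    (fun j _ => by positivity)
    (fun j k hjk _ => pow_mul_lt_pow_mul hq hq₁ (by positivity) hqC hjk) (by positivity)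
    (fun x hx => ?_) (fun x hx => ?_) (fun j hj x hx t _ a ha => ?_)
    (fun j hj p hp x hx t ht hc => ?_) (ofReal_measureReal hDc.measure_lt_top.ne).ge
    ((lintegral_mono_set hD).trans hg) measureReal_nonneg hS
  · rw [add_zero, norm_gradient_gaussianBarrier hm0]
    have hexp := exp_le_exp_neg_mul_sq hm0 hx.2
    have : 2 * 1 * Real.exp (-m * 16) * 1 ≤ 2 * m * Real.exp (-m * ‖x‖ ^ 2) * ‖x‖ := by
      gcongr
      exact hx.1
    linarith
  · rw [norm_zero, norm_gradient_gaussianBarrier hm0]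
    have : 2 * m * Real.exp (-m * ‖x‖ ^ 2) * ‖x‖ ≤ 2 * m * 1 * 4 := by
      gcongr
      exacts [exp_neg_mul_sq_le_one hm0 x, hx.2]
    linarith
  · have hJj : q ^ J ≤ q ^ j := pow_le_pow_of_le_one hq.le hq₁ hj.le
    have := contraction_hessian_gaussianBarrier_nonneg ha hν hmν hx.1
    have : 0 ≤ q ^ j := by positivity
    nlinarith
  · rw [smul_zero, mem_closedBall_zero_iff] at hp
    exact hc.pos_and_closedAnnulus_mem_nhds hm (by positivity)
      (pow_le_pow_of_le_one hq.le hq₁ hj.le) (pow_le_one₀ hq.le hq₁) hv hball hz₁ hz₃ hlt hp hx ht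

end

lemma exists_unit_spreading [NeZero n] {ν S : ℝ} (hν : 0 < ν) (hS : 0 ≤ S) :
    ∃ c K : ℝ, 0 < c ∧ c ≤ 1 ∧ 1 ≤ K ∧ ∀ (g : En n → ℝ≥0∞) (v : En n × ℝ → ℝ),
      IsSupersolution ν g v 0 5 0 K →
      ∫⁻ x in ball (0 : En n) 5, g x ^ n ≤ ENNReal.ofReal S →
      (∀ x ∈ closedBall (0 : En n) 1, ∀ t ∈ Icc 0 K, 1 ≤ v (x, t)) →
      ∀ x, 1 ≤ ‖x‖ → ‖x‖ ≤ 3 → c ≤ v (x, K) := by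
  set m : ℝ := n * ν ^ 2 + 1
  have hmν : n * ν ^ 2 ≤ m := by linarith
  have hm : 1 ≤ m := le_add_of_nonneg_left (by positivity)
  set E : ℝ := Real.exp (-m * 16)
  have hE : 0 < E := Real.exp_pos _
  have hE₁ : E ≤ 1 := Real.exp_le_one_iff.2 (by linarith)
  obtain ⟨q, hq, hqC⟩ := exists_pos_mul_lt (show 0 < E / 16 by positivity) (8 * m + 1)
  have hq₁ : q ≤ 1 := by nlinarith
  obtain ⟨J, hJ⟩ := exists_nat_mul_lt (a := (E / 16) ^ n * volume.real (ball (0 : En n) 1))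
    (mul_pos (by positivity) volume_real_unitBall_pos)
    ((16 * (ν * (8 * m + 1))) ^ n * (volume.real (closedAnnulus n 1 4) + S))
  have hqJ : q ^ J ≤ 1 := pow_le_one₀ hq.le hq₁
  refine ⟨q ^ J * E / 4, (q ^ J)⁻¹, by positivity, by nlinarith [pow_pos hq J],
    (one_le_inv₀ (by positivity)).2 hqJ, fun g v hv hg hball x hx₁ hx₃ => ?_⟩
  by_contra! hlt
  exact hJ.not_ge (hv.scales_mul_le_of_lt_exp hν hmν hm hq hq₁ (by rwa [mul_comm]) hball hS hg hx₁
    hx₃ hlt)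

lemma exists_spreading [NeZero n] {ν S : ℝ} (hν : 0 < ν) (hS : 0 ≤ S) :
    ∃ c K : ℝ, 0 < c ∧ c ≤ 1 ∧ 1 ≤ K ∧
      ∀ (g : En n → ℝ≥0∞) (v : En n × ℝ → ℝ) (z : En n) (ρ m τ : ℝ), 0 < ρ → 0 ≤ m →
        IsSupersolution ν g v z (5 * ρ) τ (τ + K * ρ ^ 2) →
        ∫⁻ x in ball z (5 * ρ), g x ^ n ≤ ENNReal.ofReal S →
        (∀ x ∈ closedBall z ρ, ∀ t ∈ Icc τ (τ + K * ρ ^ 2), m ≤ v (x, t)) →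
        ∀ x, ρ ≤ dist x z → dist x z ≤ 3 * ρ → c * m ≤ v (x, τ + K * ρ ^ 2) := by
  obtain ⟨c, K, hc, hc₁, hK, hunit⟩ := exists_unit_spreading (n := n) hν hS
  refine ⟨c, K, hc, hc₁, hK, fun g v z ρ m τ hρ hm hv hg hball x hx₁ hx₃ => ?_⟩
  have hKρ : 0 ≤ K * ρ ^ 2 := by positivity
  rcases hm.eq_or_lt with rfl | hm
  · rw [mul_zero]
    exact hv.nonneg x (by rw [mem_ball]; linarith) _ ⟨by linarith, le_rfl⟩
  obtain ⟨w, rfl⟩ : ∃ w, x = z + ρ • w := ⟨ρ⁻¹ • (x - z), by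
    rw [smul_smul, mul_inv_cancel₀ hρ.ne', one_smul, add_sub_cancel]⟩
  rw [dist_add_smul_self z w hρ.le] at hx₁ hx₃
  have hv' := hv.normalize hρ (inv_pos.2 hm)
  rw [add_sub_cancel_left, mul_div_cancel_right₀ _ (by positivity)] at hv'
  have hle := hunit _ _ hv' ?_ (fun y hy t ht => ?_) w (by nlinarith) (by nlinarith)
  · rwa [inv_mul_eq_div, le_div_iff₀ hm, mul_comm (ρ ^ 2)] at hle
  · rwa [← preimage_add_smul_ball z hρ 5, setLIntegral_rescale_pow hv.measurable_drift hρ z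
      measurableSet_ball]
  · rw [inv_mul_eq_div, one_le_div hm]
    rw [mem_closedBall_zero_iff] at hy
    refine hball _ ?_ _ ⟨by nlinarith [ht.1, sq_nonneg ρ], by nlinarith [ht.2, sq_nonneg ρ]⟩
    rw [mem_closedBall, dist_add_smul_self z y hρ.le]
    exact mul_le_of_le_one_right hρ.le hy

/-! ### Expansion of balls -/

lemma exists_ball_enlargement [NeZero n] {ν S : ℝ} (hν : 0 < ν) (hS : 0 ≤ S) :
    ∃ c K : ℝ, 0 < c ∧ c ≤ 1 ∧ 1 ≤ K ∧
      ∀ (g : En n → ℝ≥0∞) (v : En n × ℝ → ℝ) (z : En n) (R r ε m t₁ t₂ : ℝ), 0 < ε → 0 ≤ m →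
        5 / 2 * ε ≤ r → r + 4 * ε ≤ R → IsSupersolution ν g v z R t₁ t₂ →
        ∫⁻ x in ball z R, g x ^ n ≤ ENNReal.ofReal S →
        (∀ x ∈ ball z r, ∀ t ∈ Icc t₁ t₂, m ≤ v (x, t)) →
        ∀ x ∈ ball z (r + ε), ∀ t ∈ Icc (t₁ + K * ε ^ 2) t₂, c * m ≤ v (x, t) := by
  obtain ⟨c, K, hc, hc₁, hK, hspread⟩ := exists_spreading (n := n) hν hS
  refine ⟨c, K, hc, hc₁, hK, fun g v z R r ε m t₁ t₂ hε hm hr hR hv hg hle x hx t ht => ?_⟩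
  rw [mem_ball] at hx
  have hKε : 0 ≤ K * ε ^ 2 := by positivity
  rcases lt_or_ge (dist x z) r with hxr | hxr
  · exact (mul_le_of_le_one_left hm hc₁).trans (hle x hxr t ⟨by linarith [ht.1], ht.2⟩)
  obtain ⟨z', hxz', hz'z⟩ := exists_dist_le_le (x := x) (z := z) (δ := 5 / 2 * ε)
    (ε := dist x z - 5 / 2 * ε) (by positivity) (by linarith) (by linarith)
  have htri := dist_triangle x z' z
  have hsub : ball z' (5 * ε) ⊆ ball z R := ball_subset_ball' (by linarith)
  have hend : t - K * ε ^ 2 + K * ε ^ 2 = t := sub_add_cancel _ _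
  have := hspread g v z' ε m (t - K * ε ^ 2) hε hm
    (hv.mono hsub (by linarith [ht.1]) (hend.trans_le ht.2)) ((lintegral_mono_set hsub).trans hg)
    (fun w hw s hs => hle w (closedBall_subset_ball' (by linarith) hw) s
      ⟨by linarith [ht.1, hs.1], hs.2.trans (hend.trans_le ht.2)⟩) x (by linarith) (by linarith)
  rwa [hend] at this

lemma exists_ball_enlargement_iterate [NeZero n] {ν S : ℝ} (hν : 0 < ν) (hS : 0 ≤ S) :
    ∃ c K : ℝ, 0 < c ∧ c ≤ 1 ∧ 1 ≤ K ∧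
      ∀ (g : En n → ℝ≥0∞) (v : En n × ℝ → ℝ) (z : En n) (R r ε m t₁ t₂ : ℝ), 0 < ε → 0 ≤ m →
        5 / 2 * ε ≤ r → IsSupersolution ν g v z R t₁ t₂ →
        ∫⁻ x in ball z R, g x ^ n ≤ ENNReal.ofReal S →
        (∀ x ∈ ball z r, ∀ t ∈ Icc t₁ t₂, m ≤ v (x, t)) → ∀ k : ℕ, r + (k + 3) * ε ≤ R →
        ∀ x ∈ ball z (r + k * ε), ∀ t ∈ Icc (t₁ + k * (K * ε ^ 2)) t₂, c ^ k * m ≤ v (x, t) := by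
  obtain ⟨c, K, hc, hc₁, hK, hstep⟩ := exists_ball_enlargement (n := n) hν hS
  refine ⟨c, K, hc, hc₁, hK, fun g v z R r ε m t₁ t₂ hε hm hr hv hg hle k => ?_⟩
  induction k with
  | zero => simpa using fun _ => hle
  | succ k ih =>
    intro hR x hx t ht
    push_cast at hR hx ht
    have hkε : 0 ≤ k * ε := by positivity
    have hkK : 0 ≤ k * (K * ε ^ 2) := by positivity
    rw [pow_succ', mul_assoc]
    exact hstep g v z R (r + k * ε) ε (c ^ k * m) (t₁ + k * (K * ε ^ 2)) t₂ hε (by positivity)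
      (by linarith) (by linarith) (hv.mono subset_rfl (by linarith) le_rfl) hg
      (ih (by linarith)) x (ball_subset_ball (by linarith) hx) t ⟨by linarith [ht.1], ht.2⟩

lemma exists_ball_expansion [NeZero n] {ν S : ℝ} (hν : 1 ≤ ν) (hS : 0 ≤ S) :
    ∃ κ₀ : ℝ, 0 < κ₀ ∧ ∀ κ, 0 < κ → κ ≤ κ₀ → ∃ c : ℝ, 0 < c ∧ c ≤ 1 ∧
      ∀ (g : En n → ℝ≥0∞) (v : En n × ℝ → ℝ) (z : En n) (ρ m τ κ' : ℝ), 0 < ρ → 0 ≤ m →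
        κ / 2 ≤ κ' → κ' ≤ κ → IsSupersolution ν g v z (2 * ρ) τ (τ + κ' * ρ ^ 2) →
        ∫⁻ x in ball z (2 * ρ), g x ^ n ≤ ENNReal.ofReal S → (∀ x ∈ ball z ρ, m ≤ v (x, τ)) →
        ∀ x ∈ ball z (3 / 2 * ρ), c * m ≤ v (x, τ + κ' * ρ ^ 2) := by
  obtain ⟨c₁, κ₀, hc₁, hc₁1, hκ₀, -, hlocal⟩ := exists_local_positivity (n := n) hν hS
  obtain ⟨c₂, K, hc₂, hc₂1, -, henlarge⟩ :=
    exists_ball_enlargement_iterate (n := n) (zero_lt_one.trans_le hν) hS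
  refine ⟨κ₀, hκ₀, fun κ hκ hκκ₀ => ?_⟩
  obtain ⟨M, hM⟩ := exists_nat_gt (max (2 * K / κ) 6)
  have hM6 : (6 : ℝ) < M := (le_max_right _ _).trans_lt hM
  have hMK : 2 * K < M * κ := (div_lt_iff₀ hκ).1 ((le_max_left _ _).trans_lt hM)
  refine ⟨c₂ ^ M * c₁, by positivity, mul_le_one₀ (pow_le_one₀ hc₂.le hc₂1) hc₁.le hc₁1,
    fun g v z ρ m τ κ' hρ hm hκ₁ hκ₂ hv hg hbot x hx => ?_⟩
  obtain ⟨ε, hε⟩ : ∃ ε, ε = ρ / M := ⟨_, rfl⟩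
  have hMε : M * ε = ρ := by rw [hε, mul_div_cancel₀ _ (by positivity)]
  have hε₀ : 0 < ε := by rw [hε]; positivity
  have hε₆ : 6 * ε ≤ ρ := by nlinarith
  have htime : M * (K * ε ^ 2) ≤ κ' * ρ ^ 2 := by
    have h₁ : K * ε * ρ ≤ κ / 2 * (M * ε) * ρ := by nlinarith [mul_pos hε₀ hρ]
    calc M * (K * ε ^ 2) = K * ε * (M * ε) := by ring
      _ ≤ κ / 2 * ρ ^ 2 := by rw [hMε] at h₁ ⊢; linarith
      _ ≤ κ' * ρ ^ 2 := by gcongr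
  have hκ'ρ : κ' * ρ ^ 2 ≤ κ₀ * ρ ^ 2 := by gcongr; exact hκ₂.trans hκκ₀
  rw [mul_assoc]
  refine henlarge g v z (2 * ρ) (ρ / 2) ε (c₁ * m) τ (τ + κ' * ρ ^ 2) hε₀ (by positivity)
    (by linarith) hv hg (fun w hw => hlocal g v z ρ m τ _ hρ hm (by linarith) hv hg hbot w
      (ball_subset_closedBall hw)) M (by linarith) x (ball_subset_ball (by linarith) hx) _
    ⟨by linarith, le_rfl⟩

/-- Positivity of `v` on a ball of radius `ρ` expands to the concentric ball of radius `3ρ/2` after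
time about `κ ρ²`, with loss factor `c`, as long as the concentric cylinder of radius `2ρ` stays in
the unit cylinder of height `T`. -/
def ExpandsBalls (κ c T : ℝ) (v : En n × ℝ → ℝ) : Prop :=
  ∀ ⦃z : En n⦄ ⦃ρ m τ κ' : ℝ⦄, 0 < ρ → 0 ≤ m → κ / 2 ≤ κ' → κ' ≤ κ → ‖z‖ + 2 * ρ ≤ 1 → 0 ≤ τ →
    τ + κ' * ρ ^ 2 ≤ T → (∀ x ∈ ball z ρ, m ≤ v (x, τ)) →
    ∀ x ∈ ball z (3 / 2 * ρ), c * m ≤ v (x, τ + κ' * ρ ^ 2)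

lemma exists_expandsBalls [NeZero n] {ν S : ℝ} (hν : 1 ≤ ν) (hS : 0 ≤ S) :
    ∃ κ₀ : ℝ, 0 < κ₀ ∧ ∀ κ, 0 < κ → κ ≤ κ₀ → ∃ c : ℝ, 0 < c ∧ c ≤ 1 ∧
      ∀ (g : En n → ℝ≥0∞) (v : En n × ℝ → ℝ) (T : ℝ), IsSupersolution ν g v 0 1 0 T →
        ∫⁻ x in ball (0 : En n) 1, g x ^ n ≤ ENNReal.ofReal S → ExpandsBalls κ c T v := by
  obtain ⟨κ₀, hκ₀, hexp⟩ := exists_ball_expansion (n := n) hν hS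
  refine ⟨κ₀, hκ₀, fun κ hκ hκκ₀ => ?_⟩
  obtain ⟨c, hc, hc₁, hstep⟩ := hexp κ hκ hκκ₀
  refine ⟨c, hc, hc₁, fun g v T hv hg z ρ m τ κ' hρ hm h₁ h₂ hz hτ hτT hbot => ?_⟩
  have hsub : ball z (2 * ρ) ⊆ ball 0 1 := ball_subset_ball' (by rw [dist_zero_right]; linarith)
  exact hstep g v z ρ m τ κ' hρ hm h₁ h₂ (hv.mono hsub hτ hτT) ((lintegral_mono_set hsub).trans hg)
    hbot

/-- The time in which balls of radius `ρ`, growing by the factor `9/8` in time `κ ρ²`, reach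
radius `1/2`; it is the sum of a geometric series with ratio `(9/8)² = 1 + 17/64`, plus `κ/4` for
the last step. -/
def growthTime (κ ρ : ℝ) : ℝ := 64 / 17 * κ * (1 / 4 - ρ ^ 2) + κ / 4

lemma growthTime_mul_add (κ ρ : ℝ) : growthTime κ (9 / 8 * ρ) + κ * ρ ^ 2 = growthTime κ ρ := by
  unfold growthTime
  ring

lemma growthTime_le {κ : ℝ} (hκ : 0 ≤ κ) (ρ : ℝ) : growthTime κ ρ ≤ 2 * κ := by
  unfold growthTime
  nlinarith [mul_nonneg hκ (sq_nonneg ρ)]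

lemma mul_sq_le_growthTime {κ ρ : ℝ} (hκ : 0 ≤ κ) (hρ : ρ ^ 2 ≤ 1 / 4) :
    κ * ρ ^ 2 ≤ growthTime κ ρ := by
  unfold growthTime
  nlinarith

namespace ExpandsBalls

variable {κ c T ρ t m : ℝ} {v : En n × ℝ → ℝ} {z : En n}

lemma exists_time_of_four_ninths_le (h : ExpandsBalls κ c T v) (hκ : 0 ≤ κ) (hc : 0 ≤ c)
    (hc₁ : c ≤ 1) (k : ℕ) (hρ : 4 / 9 ≤ ρ) (hz : ‖z‖ + 2 * ρ ≤ 1) (hm : 0 ≤ m) (ht : 0 ≤ t)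
    (htT : t + growthTime κ ρ ≤ T) (hv : ∀ x ∈ ball z ρ, m ≤ v (x, t)) :
    ∃ t' ∈ Icc t (t + growthTime κ ρ),
      ∀ x ∈ ball (0 : En n) (1 / 2), c ^ (k + 1) * m ≤ v (x, t') := by
  have hz₀ := norm_nonneg z
  have htime : κ * ρ ^ 2 ≤ growthTime κ ρ := mul_sq_le_growthTime hκ (by nlinarith)
  have hκρ : 0 ≤ κ * ρ ^ 2 := by positivity
  refine ⟨t + κ * ρ ^ 2, ⟨by linarith, by linarith⟩, fun x hx => ?_⟩
  calc c ^ (k + 1) * m ≤ c * m := by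
        gcongr
        exact pow_le_of_le_one hc hc₁ k.succ_ne_zero
    _ ≤ v (x, t + κ * ρ ^ 2) :=
        h (by linarith) hm (by linarith) le_rfl hz ht (by linarith) hv x
          (ball_subset_ball' (by rw [dist_zero_left]; linarith) hx)

/-- The centre moves towards the origin by `ρ/4` at each step, so that the next cylinder still fits
into the unit cylinder. -/
lemma exists_time_pow_mul_le_on_ball_half (h : ExpandsBalls κ c T v) (hκ : 0 ≤ κ) (hc : 0 ≤ c)
    (hc₁ : c ≤ 1) (k : ℕ) (hρ : 0 < ρ) (hk : 4 / 9 ≤ ρ * (9 / 8) ^ k) (hz : ‖z‖ + 2 * ρ ≤ 1)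
    (hm : 0 ≤ m) (ht : 0 ≤ t) (htT : t + growthTime κ ρ ≤ T) (hv : ∀ x ∈ ball z ρ, m ≤ v (x, t)) :
    ∃ t' ∈ Icc t (t + growthTime κ ρ),
      ∀ x ∈ ball (0 : En n) (1 / 2), c ^ (k + 1) * m ≤ v (x, t') := by
  induction k generalizing ρ t m z with
  | zero =>
    rw [pow_zero, mul_one] at hk
    exact h.exists_time_of_four_ninths_le hκ hc hc₁ 0 hk hz hm ht htT hv
  | succ k ih =>
    rcases le_or_gt (4 / 9) ρ with hρ₄ | hρ₄
    · exact h.exists_time_of_four_ninths_le hκ hc hc₁ (k + 1) hρ₄ hz hm ht htT hv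
    have hstep := growthTime_mul_add κ ρ
    have hκρ : 0 ≤ κ * ρ ^ 2 := by positivity
    have hnext : 0 ≤ growthTime κ (9 / 8 * ρ) :=
      (by positivity : 0 ≤ κ * (9 / 8 * ρ) ^ 2).trans (mul_sq_le_growthTime hκ (by nlinarith))
    obtain ⟨z', hzz', hz'⟩ := exists_dist_le_le (x := z) (z := 0) (δ := ρ / 4)
      (ε := 1 - 9 / 4 * ρ) (by positivity) (by linarith) (by rw [dist_zero_right]; linarith)
    rw [dist_comm] at hzz'
    rw [dist_zero_right] at hz'
    obtain ⟨t', ht', hle⟩ := ih (ρ := 9 / 8 * ρ) (t := t + κ * ρ ^ 2) (m := c * m) (z := z')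
      (by positivity) (by rw [pow_succ] at hk; linarith) (by linarith) (by positivity)
      (by positivity) (by linarith) fun x hx =>
        h hρ hm (by linarith) le_rfl hz ht (by linarith) hv x
          (ball_subset_ball' (by linarith) hx)
    refine ⟨t', ⟨by linarith [ht'.1], by linarith [ht'.2]⟩, fun x hx => ?_⟩
    rw [pow_succ, mul_assoc]
    exact hle x hx

lemma pow_mul_le_on_ball_half_add {κ' : ℝ} (h : ExpandsBalls κ c T v) (hc : 0 ≤ c) (hκ' : 0 ≤ κ')
    (h₁ : κ / 2 ≤ κ') (h₂ : κ' ≤ κ) (hm : 0 ≤ m) (ht : 0 ≤ t)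
    (hv : ∀ x ∈ ball (0 : En n) (1 / 2), m ≤ v (x, t)) (N : ℕ) (hT : t + N * (κ' / 4) ≤ T) :
    ∀ x ∈ ball (0 : En n) (1 / 2), c ^ N * m ≤ v (x, t + N * (κ' / 4)) := by
  induction N with
  | zero => simpa using hv
  | succ N ih =>
    intro x hx
    have htime : t + (N + 1 : ℕ) * (κ' / 4) = t + N * (κ' / 4) + κ' * (1 / 2) ^ 2 := by
      push_cast
      ring
    rw [htime] at hT ⊢
    rw [pow_succ', mul_assoc]
    exact h one_half_pos (by positivity) h₁ h₂ (by norm_num) (by positivity) hT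
      (ih (le_trans (le_add_of_nonneg_right (by positivity)) hT)) x
      (ball_subset_ball (by norm_num) hx)

/-- The remaining time `T - t` is divided into equal steps of length `κ'/4` with `κ/2 ≤ κ' ≤ κ`. -/
lemma pow_mul_le_on_ball_half_final {M : ℕ} (h : ExpandsBalls κ c T v) (hκ : 0 < κ) (hc : 0 ≤ c)
    (hc₁ : c ≤ 1) (hM : 8 / κ ≤ M) (hm : 0 ≤ m) (ht : 0 ≤ t) (htκ : κ ≤ T - t) (ht₁ : T - t ≤ 1)
    (hv : ∀ x ∈ ball (0 : En n) (1 / 2), m ≤ v (x, t)) :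
    ∀ x ∈ ball (0 : En n) (1 / 2), c ^ M * m ≤ v (x, T) := by
  intro x hx
  have hL : 0 < T - t := hκ.trans_le htκ
  set N := ⌈4 * (T - t) / κ⌉₊
  have hN : 4 * (T - t) ≤ N * κ := (div_le_iff₀ hκ).1 (Nat.le_ceil _)
  have hN' : N * κ ≤ 8 * (T - t) := by
    have hceil := Nat.ceil_lt_add_one (a := 4 * (T - t) / κ) (by positivity)
    calc N * κ ≤ (4 * (T - t) / κ + 1) * κ := by gcongr
      _ = 4 * (T - t) + κ := by field_simp
      _ ≤ 8 * (T - t) := by linarith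
  have hN₀ : 0 < (N : ℝ) := pos_of_mul_pos_left (by linarith) hκ.le
  have hNM : N ≤ M := by
    have : (N : ℝ) ≤ 8 / κ := (le_div_iff₀ hκ).2 (by linarith)
    exact_mod_cast this.trans hM
  have hend : t + N * (4 * (T - t) / N / 4) = T := by
    field_simp
    ring
  have hle := h.pow_mul_le_on_ball_half_add hc (κ' := 4 * (T - t) / N) (by positivity)
    ((le_div_iff₀ hN₀).2 (by linarith)) ((div_le_iff₀ hN₀).2 (by linarith)) hm ht hv N hend.le x hx
  rw [hend] at hle
  refine le_trans ?_ hle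
  gcongr ?_ * m
  exact pow_le_pow_of_le_one hc hc₁ hNM

end ExpandsBalls

lemma exists_one_le_pow_mul_pow {c : ℝ} (hc : 0 < c) (M : ℕ) :
    ∃ γ : ℕ, 0 < γ ∧ ∀ ρ : ℝ, 0 < ρ → ρ ≤ 1 →
      ∃ k : ℕ, 4 / 9 ≤ ρ / 2 * (9 / 8) ^ k ∧ 1 ≤ (2 / ρ) ^ γ * c ^ (k + M) := by
  obtain ⟨α, hα⟩ := pow_unbounded_of_one_lt c⁻¹ (show (1 : ℝ) < 9 / 8 by norm_num)
  have hcα : 1 ≤ (9 / 8) ^ α * c := ((inv_lt_iff_one_lt_mul₀ hc).1 hα).le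
  refine ⟨α + α * (1 + M) + 1, by positivity, fun ρ hρ hρ₁ => ?_⟩
  have hx : 2 ≤ 2 / ρ := by rw [le_div_iff₀ hρ]; linarith
  have hx' : 9 / 8 ≤ 2 / ρ := by linarith
  have hx₁ : 1 ≤ 2 / ρ := by linarith
  obtain ⟨k, hk, hk'⟩ := exists_nat_pow_near hx₁
    (show (1 : ℝ) < 9 / 8 by norm_num)
  refine ⟨k + 1, ?_, ?_⟩
  · rw [div_lt_iff₀ hρ] at hk'
    linarith
  · calc 1 ≤ ((9 / 8) ^ α * c) ^ k * ((9 / 8) ^ α * c) ^ (1 + M) * 1 :=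
          one_le_mul_of_one_le_of_one_le (one_le_mul_of_one_le_of_one_le (one_le_pow₀ hcα)
            (one_le_pow₀ hcα)) le_rfl
      _ = ((9 / 8) ^ k) ^ α * (9 / 8) ^ (α * (1 + M)) * 1 * c ^ (k + 1 + M) := by ring
      _ ≤ (2 / ρ) ^ α * (2 / ρ) ^ (α * (1 + M)) * (2 / ρ) * c ^ (k + 1 + M) := by
          gcongr
      _ = (2 / ρ) ^ (α + α * (1 + M) + 1) * c ^ (k + 1 + M) := by ring

lemma exists_infimum_comparison_unit [NeZero n] {ν S h : ℝ} (hν : 1 ≤ ν) (hS : 0 ≤ S)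
    (hh : 0 < h) :
    ∃ γ : ℕ, 0 < γ ∧ ∀ (g : En n → ℝ≥0∞) (v : En n × ℝ → ℝ) (z : En n) (T ρ m : ℝ),
      h ^ 2 ≤ T → T ≤ 1 → 0 < ρ → 0 ≤ m → ‖z‖ + ρ ≤ 1 → IsSupersolution ν g v 0 1 0 T →
      ∫⁻ x in ball (0 : En n) 1, g x ^ n ≤ ENNReal.ofReal S → (∀ x ∈ ball z ρ, m ≤ v (x, 0)) →
      ∀ x ∈ ball (0 : En n) (1 / 2), m ≤ (2 / ρ) ^ γ * v (x, T) := by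
  obtain ⟨κ₀, hκ₀, hexp⟩ := exists_expandsBalls (n := n) hν hS
  obtain ⟨κ, hκ, hκκ₀, hκh⟩ : ∃ κ, 0 < κ ∧ κ ≤ κ₀ ∧ κ ≤ h ^ 2 / 4 :=
    ⟨min κ₀ (h ^ 2 / 4), by positivity, min_le_left _ _, min_le_right _ _⟩
  obtain ⟨c, hc, hc₁, hexp⟩ := hexp κ hκ hκκ₀
  obtain ⟨M, hM⟩ := exists_nat_gt (8 / κ)
  obtain ⟨γ, hγ, hpow⟩ := exists_one_le_pow_mul_pow hc (1 + M)
  refine ⟨γ, hγ, fun g v z T ρ m hT hT₁ hρ hm hz hv hg hbot x hx => ?_⟩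
  have hE := hexp g v T hv hg
  obtain ⟨k, hk, hck⟩ := hpow ρ hρ (by linarith [norm_nonneg z])
  have htime := growthTime_le hκ.le (ρ / 2)
  obtain ⟨t, ht, hhalf⟩ := hE.exists_time_pow_mul_le_on_ball_half hκ.le hc.le hc₁ k (half_pos hρ) hk
    (by linarith) hm le_rfl (by linarith) fun w hw => hbot w (ball_subset_ball (by linarith) hw)
  have hfinal := hE.pow_mul_le_on_ball_half_final hκ hc.le hc₁ hM.le (by positivity) ht.1
    (by linarith [ht.2]) (by linarith [ht.1]) hhalf x hx
  calc m ≤ (2 / ρ) ^ γ * c ^ (k + (1 + M)) * m := le_mul_of_one_le_left hm hck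
    _ = (2 / ρ) ^ γ * (c ^ M * (c ^ (k + 1) * m)) := by ring
    _ ≤ (2 / ρ) ^ γ * v (x, T) := by gcongr

/-! ### Classical supersolutions -/

lemma continuous_contraction :
    Continuous fun q : Matrix (Fin n) (Fin n) ℝ × Matrix (Fin n) (Fin n) ℝ =>
      contraction q.1 q.2 := by
  unfold contraction
  fun_prop

lemma isCompact_setOf_isElliptic {ν : ℝ} (hν : 0 ≤ ν) :
    IsCompact {a : Matrix (Fin n) (Fin n) ℝ | IsElliptic ν a} := by
  have hK : IsCompact (univ.pi fun _ : Fin n => univ.pi fun _ : Fin n => Icc (-ν) ν) :=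
    isCompact_univ_pi fun _ => isCompact_univ_pi fun _ => isCompact_Icc
  refine hK.of_isClosed_subset ?_ fun a ha i _ j _ => abs_le.1 (ha.abs_apply_le hν i j)
  simp only [IsElliptic, ofPred_and, ofPred_forall]
  exact (isClosed_iInter fun ξ => isClosed_le continuous_const (by fun_prop)).inter
    (isClosed_le (by fun_prop) continuous_const)

/-- Pucci's minimal operator for the class of elliptic matrices: the infimum of `Σ a_ij H_ij` over
all elliptic `a`. -/
def minimalOperator (ν : ℝ) (H : Matrix (Fin n) (Fin n) ℝ) : ℝ :=
  sInf ((fun a => contraction a H) '' {a | IsElliptic ν a})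

section MinimalOperator

variable {ν : ℝ} {a : Matrix (Fin n) (Fin n) ℝ}

lemma continuous_minimalOperator (hν : 0 ≤ ν) : Continuous (minimalOperator (n := n) ν) :=
  (isCompact_setOf_isElliptic hν).continuous_sInf
    (f := fun H a : Matrix (Fin n) (Fin n) ℝ => contraction a H)
    (continuous_contraction.comp continuous_swap)

lemma isCompact_image_contraction (hν : 0 ≤ ν) (H : Matrix (Fin n) (Fin n) ℝ) :
    IsCompact ((fun a => contraction a H) '' {a | IsElliptic ν a}) :=
  (isCompact_setOf_isElliptic hν).image (continuous_contraction.comp (.prodMk_left H))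

lemma IsElliptic.minimalOperator_le (ha : IsElliptic ν a) (hν : 0 ≤ ν)
    (H : Matrix (Fin n) (Fin n) ℝ) : minimalOperator ν H ≤ contraction a H :=
  csInf_le (isCompact_image_contraction hν H).bddBelow ⟨a, ha, rfl⟩

lemma IsElliptic.exists_contraction_eq_minimalOperator (ha : IsElliptic ν a) (hν : 0 ≤ ν)
    (H : Matrix (Fin n) (Fin n) ℝ) :
    ∃ a', IsElliptic ν a' ∧ contraction a' H = minimalOperator ν H :=
  (isCompact_image_contraction hν H).sInf_mem ⟨_, a, ha, rfl⟩

end MinimalOperator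

/-- At a zero of `p` the quotient has the junk value `0`, the least element of `ℝ≥0∞`. -/
lemma lowerSemicontinuousAt_ofReal_div {α : Type*} [TopologicalSpace α] {f p : α → ℝ} {x : α}
    (hf : ContinuousAt f x) (hp : ContinuousAt p x) :
    LowerSemicontinuousAt (fun z => ENNReal.ofReal (f z / p z)) x := by
  by_cases hpx : p x = 0
  · intro c hc
    simp [hpx] at hc
  · exact (continuous_ofReal.continuousAt.comp (hf.div hp hpx)).lowerSemicontinuousAt

lemma le_essSup_restrict_of_lowerSemicontinuousAt {α : Type*} [TopologicalSpace α]
    [MeasurableSpace α] [OpensMeasurableSpace α] {μ : Measure α} [μ.IsOpenPosMeasure]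
    {f β : α → ℝ≥0∞} {I : Set α} {x : α} (hI : IsOpen I) (hx : x ∈ I)
    (hf : LowerSemicontinuousAt f x) (hle : ∀ z ∈ I, f z ≤ β z) :
    f x ≤ essSup β (μ.restrict I) := by
  by_contra! hlt
  have hae := (ae_restrict_iff' hI.measurableSet).1 (ENNReal.ae_le_essSup (μ := μ.restrict I) β)
  have hpos := μ.measure_pos_of_mem_nhds (Filter.inter_mem (hI.mem_nhds hx) (hf _ hlt))
  refine hpos.ne' (measure_mono_null ?_ hae)
  rintro z ⟨hzI, hz⟩ hle'
  exact (hz.trans_le (hle z hzI)).not_ge (hle' hzI)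

/-- The supremum over the times in `I` of a function on `U ×ˢ I`, as a function of the space
variable, extended by zero outside `U`. -/
def timeSup {α : Type*} (U : Set α) (I : Set ℝ) (q : α × ℝ → ℝ≥0∞) (x : α) : ℝ≥0∞ :=
  ⨆ t ∈ I, U.indicator (fun z => q (z, t)) x

section TimeSup

variable {α : Type*} {U : Set α} {I : Set ℝ} {q β : α × ℝ → ℝ≥0∞} {x : α}

lemma timeSup_of_mem (hx : x ∈ U) : timeSup U I q x = ⨆ t ∈ I, q (x, t) := by
  simp [timeSup, hx]

variable [TopologicalSpace α]

lemma lowerSemicontinuous_timeSup (hU : IsOpen U)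
    (hq : ∀ X ∈ U ×ˢ I, LowerSemicontinuousAt q X) : LowerSemicontinuous (timeSup U I q) := by
  refine lowerSemicontinuous_biSup fun t ht x c hc => ?_
  by_cases hx : x ∈ U
  · simp only [gt_iff_lt, indicator_of_mem hx] at hc
    filter_upwards [hU.mem_nhds hx,
      (hq (x, t) ⟨hx, ht⟩).comp (g := fun z => (z, t)) (by fun_prop) c hc] with z hz hcz
    rwa [indicator_of_mem hz]
  · simp [hx] at hc

lemma timeSup_le_essSup (hI : IsOpen I) (hq : ∀ X ∈ U ×ˢ I, LowerSemicontinuousAt q X)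
    (hle : ∀ X ∈ U ×ˢ I, q X ≤ β X) (hx : x ∈ U) :
    timeSup U I q x ≤ essSup (fun t => β (x, t)) (volume.restrict I) := by
  rw [timeSup_of_mem hx]
  exact iSup₂_le fun t ht => le_essSup_restrict_of_lowerSemicontinuousAt hI ht
    ((hq (x, t) ⟨hx, ht⟩).comp (g := fun s => (x, s)) (by fun_prop)) fun s hs => hle _ ⟨hx, hs⟩

end TimeSup

/-- The function `g` is the supremum of `F / P` over the times. -/
lemma exists_measurable_le_essSup_and_le_mul {α : Type*} [TopologicalSpace α] [MeasurableSpace α]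
    [OpensMeasurableSpace α] {U : Set α} {t₁ t₂ : ℝ} {F P : α × ℝ → ℝ} {β : α × ℝ → ℝ≥0∞}
    (hU : IsOpen U) (ht : t₁ < t₂) (hF : ContinuousOn F (U ×ˢ Icc t₁ t₂))
    (hP : ContinuousOn P (U ×ˢ Icc t₁ t₂)) (hP₀ : ∀ X ∈ U ×ˢ Ioo t₁ t₂, 0 ≤ P X)
    (hF₀ : ∀ X ∈ U ×ˢ Ioo t₁ t₂, P X = 0 → F X ≤ 0)
    (hle : ∀ X ∈ U ×ˢ Ioo t₁ t₂, ENNReal.ofReal (F X / P X) ≤ β X) :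
    ∃ g : α → ℝ≥0∞, Measurable g ∧
      (∀ x ∈ U, g x ≤ essSup (fun t => β (x, t)) (volume.restrict (Ioo t₁ t₂))) ∧
      ∀ x ∈ U, ∀ t ∈ Icc t₁ t₂, g x ≠ ∞ → F (x, t) ≤ (g x).toReal * P (x, t) := by
  have hlsc : ∀ X ∈ U ×ˢ Ioo t₁ t₂,
      LowerSemicontinuousAt (fun X => ENNReal.ofReal (F X / P X)) X := by
    rintro ⟨x, t⟩ ⟨hx, ht⟩
    have hnhds : U ×ˢ Icc t₁ t₂ ∈ nhds (x, t) :=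
      prod_mem_nhds (hU.mem_nhds hx) (Icc_mem_nhds ht.1 ht.2)
    exact lowerSemicontinuousAt_ofReal_div (hF.continuousAt hnhds) (hP.continuousAt hnhds)
  set g := timeSup U (Ioo t₁ t₂) fun X => ENNReal.ofReal (F X / P X)
  refine ⟨g, (lowerSemicontinuous_timeSup hU hlsc).measurable,
    fun x hx => timeSup_le_essSup isOpen_Ioo hlsc hle hx, fun x hx t ht' hg => ?_⟩
  have hslice : ∀ t ∈ Ioo t₁ t₂, F (x, t) ≤ (g x).toReal * P (x, t) := by
    intro t ht
    rcases (hP₀ (x, t) ⟨hx, ht⟩).eq_or_lt with hPx | hPx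
    · rw [← hPx, mul_zero]
      exact hF₀ (x, t) ⟨hx, ht⟩ hPx.symm
    · refine (div_le_iff₀ hPx).1 ((ENNReal.ofReal_le_iff_le_toReal hg).1 ?_)
      exact (le_iSup₂ t ht).trans_eq (timeSup_of_mem hx).symm
  have hcont : ContinuousOn (fun t => (x, t)) (Icc t₁ t₂) := by fun_prop
  have hmaps : MapsTo (fun t => (x, t)) (Icc t₁ t₂) (U ×ˢ Icc t₁ t₂) := fun t ht => ⟨hx, ht⟩
  refine le_on_closure hslice ?_ ?_ ((closure_Ioo ht.ne).symm ▸ ht') <;> rw [closure_Ioo ht.ne]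
  · exact hF.comp hcont hmaps
  · exact continuousOn_const.mul (hP.comp hcont hmaps)

lemma closure_pcyl (y : En n) (s : ℝ) {r : ℝ} (hr : 0 < r) :
    closure (pcyl (y, s) r) = closedBall y r ×ˢ Icc (s - r ^ 2) s := by
  have hs : s - r ^ 2 ≠ s := by
    have : 0 < r ^ 2 := by positivity
    linarith
  rw [pcyl, box, closure_prod_eq, closure_ball _ hr.ne', closure_Ioo hs]

section Classical

variable {ν r s : ℝ} {y : En n} {v : En n × ℝ → ℝ} {a : En n × ℝ → Matrix (Fin n) (Fin n) ℝ}
  {b : En n × ℝ → En n}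

lemma minimalOperator_sub_le_norm_mul_norm {X : En n × ℝ} (hν : 0 ≤ ν) (ha : IsElliptic ν (a X))
    (hL : -Dt v X + Lop a b v X ≤ 0) :
    minimalOperator ν (spaceHessian v X) - Dt v X ≤ ‖b X‖ * ‖spaceGradient v X‖ := by
  have hmin : minimalOperator ν (spaceHessian v X) ≤ ∑ i, ∑ j, a X i j * Dxx v i j X :=
    ha.minimalOperator_le hν _
  have hinner : ∑ i, b X i * Dx v i X = ⟪b X, spaceGradient v X⟫ := by
    simp only [spaceGradient, PiLp.inner_apply, RCLike.inner_apply, conj_trivial]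
    exact Finset.sum_congr rfl fun i _ => mul_comm _ _
  have hcs := (abs_le.1 (abs_real_inner_le_norm (b X) (spaceGradient v X))).1
  rw [Lop, hinner] at hL
  linarith

lemma IsC21.continuousOn_spaceGradient {Q : Set (En n × ℝ)} (hv : IsC21 v Q) :
    ContinuousOn (spaceGradient v) Q :=
  (PiLp.continuous_toLp 2 _).comp_continuousOn (continuousOn_pi.2 fun i => hv.cont_x i)

lemma IsC21.continuousOn_spaceHessian {Q : Set (En n × ℝ)} (hv : IsC21 v Q) :
    ContinuousOn (spaceHessian v) Q :=
  continuousOn_pi.2 fun i => continuousOn_pi.2 fun j => hv.cont_xx i j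

lemma ball_prod_Icc_subset_closure_pcyl (y : En n) (s : ℝ) (hr : 0 < r) :
    ball y r ×ˢ Icc (s - r ^ 2) s ⊆ closure (pcyl (y, s) r) := by
  rw [closure_pcyl y s hr]
  exact prod_mono_left ball_subset_closedBall

lemma exists_measurable_drift (hν : 0 ≤ ν) (hr : 0 < r)
    (hv : IsC21 v (closure (pcyl (y, s) r))) (ha : UnifParabolic ν a (pcyl (y, s) r))
    (hL : ∀ X ∈ pcyl (y, s) r, -Dt v X + Lop a b v X ≤ 0) :
    ∃ g : En n → ℝ≥0∞, Measurable g ∧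
      ∫⁻ x in ball y r, g x ^ n ≤ LxnLtinfPow b (pcyl (y, s) r) ∧
      ∀ x ∈ ball y r, ∀ t ∈ Icc (s - r ^ 2) s, g x ≠ ∞ →
        minimalOperator ν (spaceHessian v (x, t)) - Dt v (x, t) ≤
          (g x).toReal * ‖spaceGradient v (x, t)‖ := by
  have hsub := ball_prod_Icc_subset_closure_pcyl y s hr
  have hineq : ∀ X ∈ pcyl (y, s) r, minimalOperator ν (spaceHessian v X) - Dt v X ≤
      ‖b X‖ * ‖spaceGradient v X‖ := fun X hX =>
    minimalOperator_sub_le_norm_mul_norm hν (ha X hX) (hL X hX)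
  obtain ⟨g, hg, hess, hle⟩ := exists_measurable_le_essSup_and_le_mul
    (F := fun X => minimalOperator ν (spaceHessian v X) - Dt v X)
    (P := fun X => ‖spaceGradient v X‖) (β := fun X => ‖b X‖ₑ) isOpen_ball
    (sub_lt_self s (by positivity : 0 < r ^ 2))
    ((((continuous_minimalOperator hν).comp_continuousOn hv.continuousOn_spaceHessian).sub
      hv.cont_t).mono hsub)
    (hv.continuousOn_spaceGradient.mono hsub).norm (fun X _ => norm_nonneg _)
    (fun X hX hX₀ => (hineq X hX).trans_eq (by rw [hX₀, mul_zero]))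
    (fun X hX => by
      rw [← ofReal_norm]
      exact ofReal_le_ofReal (div_le_of_le_mul₀ (norm_nonneg _) (norm_nonneg _) (hineq X hX)))
  refine ⟨g, hg, ?_, hle⟩
  rw [← lintegral_indicator measurableSet_ball]
  refine lintegral_mono fun x => ?_
  by_cases hx : x ∈ ball y r
  · rw [indicator_of_mem hx]
    have hslice : {t | (x, t) ∈ pcyl (y, s) r} = Ioo (s - r ^ 2) s := by
      ext t
      exact and_iff_right hx
    rw [hslice]
    exact pow_le_pow_left' (hess x hx) n
  · rw [indicator_of_notMem hx]
    exact zero_le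

lemma isSupersolutionAt_of_isC21 {A : Matrix (Fin n) (Fin n) ℝ} {Q : Set (En n × ℝ)} {x : En n}
    {t : ℝ} {γ : ℝ≥0∞} (hν : 0 ≤ ν) (hA : IsElliptic ν A) (hv : IsC21 v Q)
    (hQ : ∀ᶠ z in nhds x, (z, t) ∈ Q)
    (hle : γ ≠ ∞ → minimalOperator ν (spaceHessian v (x, t)) - Dt v (x, t) ≤
      γ.toReal * ‖spaceGradient v (x, t)‖) : IsSupersolutionAt ν γ v x t := by
  refine ⟨Dt v (x, t), spaceGradient v (x, t), spaceHessian v (x, t),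
    (hv.diff_t _ hQ.self_of_nhds).hasDerivAt, .of_isC21 hv hQ, fun hγ => ?_⟩
  obtain ⟨a', ha', heq⟩ := hA.exists_contraction_eq_minimalOperator hν (spaceHessian v (x, t))
  exact ⟨a', ha', heq.trans_le (sub_le_iff_le_add'.1 (hle hγ))⟩

lemma exists_isSupersolution_of_isC21 (hν : 1 ≤ ν) (hr : 0 < r)
    (hv : IsC21 v (closure (pcyl (y, s) r))) (ha : UnifParabolic ν a (pcyl (y, s) r))
    (hv₀ : ∀ X ∈ pcyl (y, s) r, 0 ≤ v X)
    (hL : ∀ X ∈ pcyl (y, s) r, -Dt v X + Lop a b v X ≤ 0) :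
    ∃ g : En n → ℝ≥0∞, IsSupersolution ν g v y r (s - r ^ 2) s ∧
      ∫⁻ x in ball y r, g x ^ n ≤ LxnLtinfPow b (pcyl (y, s) r) := by
  have hν₀ : 0 ≤ ν := zero_le_one.trans hν
  have hsub := ball_prod_Icc_subset_closure_pcyl y s hr
  obtain ⟨g, hg, hgb, hineq⟩ := exists_measurable_drift hν₀ hr hv ha hL
  have hnonneg : ∀ X ∈ closure (pcyl (y, s) r), 0 ≤ v X := fun X hX =>
    le_on_closure hv₀ continuousOn_const hv.cont hX
  refine ⟨g, ⟨hg, hv.cont.mono hsub, fun x hx t ht => hnonneg _ (hsub ⟨hx, ht⟩),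
    fun x hx t ht => ?_⟩, hgb⟩
  obtain ⟨X, hX⟩ : (pcyl (y, s) r).Nonempty := closure_nonempty_iff.1 ⟨(x, t), hsub ⟨hx, ht⟩⟩
  refine isSupersolutionAt_of_isC21 hν₀ (ha X hX) hv ?_ (hineq x hx t ht)
  filter_upwards [isOpen_ball.mem_nhds hx] with z hz
  exact hsub ⟨hz, ht⟩

end Classical

lemma norm_sub_add_le_of_ball_subset_ball [NeZero n] {y z : En n} {ρ r : ℝ} (hρ : 0 < ρ)
    (hr : 0 < r) (h : ball z ρ ⊆ ball y r) : ‖z - y‖ + ρ ≤ r := by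
  have hcl : closedBall z ρ ⊆ closedBall y r := by
    rw [← closure_ball z hρ.ne', ← closure_ball y hr.ne']
    exact closure_mono h
  obtain ⟨u, hu, hzu⟩ : ∃ u : En n, ‖u‖ = 1 ∧ z - y = ‖z - y‖ • u := by
    rcases eq_or_ne (z - y) 0 with hzy | hzy
    · exact ⟨EuclideanSpace.single 0 1, by simp, by simp [hzy]⟩
    · exact ⟨‖z - y‖⁻¹ • (z - y), norm_smul_inv_norm hzy, (smul_inv_smul₀ (by simpa) _).symm⟩
  have hmem : z + ρ • u ∈ closedBall z ρ := by
    simp [norm_smul, hu, abs_of_pos hρ]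
  have hfar : z + ρ • u - y = (‖z - y‖ + ρ) • u := by
    rw [add_smul, ← hzu]
    abel
  simpa [dist_eq_norm, hfar, norm_smul, hu, abs_of_nonneg (by positivity : 0 ≤ ‖z - y‖ + ρ)]
    using hcl hmem

lemma exists_infimum_comparison_cylinder [NeZero n] {ν S h : ℝ} (hν : 1 ≤ ν) (hS : 0 ≤ S)
    (hh : 0 < h) :
    ∃ γ : ℕ, 0 < γ ∧ ∀ (g : En n → ℝ≥0∞) (v : En n × ℝ → ℝ) (y z : En n) (r ρ τ σ m : ℝ),
      0 < r → 0 < ρ → ball z ρ ⊆ ball y r → τ + h ^ 2 * r ^ 2 ≤ σ → σ ≤ τ + r ^ 2 → 0 ≤ m →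
      IsSupersolution ν g v y r τ σ → ∫⁻ x in ball y r, g x ^ n ≤ ENNReal.ofReal S →
      (∀ x ∈ ball z ρ, m ≤ v (x, τ)) →
      ∀ x ∈ ball y (r / 2), m ≤ (2 * r / ρ) ^ γ * v (x, σ) := by
  obtain ⟨γ, hγ, hunit⟩ := exists_infimum_comparison_unit (n := n) hν hS hh
  refine ⟨γ, hγ, fun g v y z r ρ τ σ m hr hρ hsub hτσ hστ hm hv hg hbot x hx => ?_⟩
  have hr₂ : 0 < r ^ 2 := by positivity
  have hnorm (w : En n) : ‖r⁻¹ • (w - y)‖ = ‖w - y‖ / r := by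
    rw [norm_smul, norm_inv, Real.norm_of_nonneg hr.le, inv_mul_eq_div]
  have hback (w : En n) : y + r • r⁻¹ • (w - y) = w := by
    rw [smul_inv_smul₀ hr.ne', add_sub_cancel]
  have hpre := preimage_add_smul_ball y hr 1
  have hz := norm_sub_add_le_of_ball_subset_ball hρ hr hsub
  rw [← one_mul r] at hv
  have hle := hunit _ _ (r⁻¹ • (z - y)) ((σ - τ) / r ^ 2) (ρ / r) m
    ((le_div_iff₀ hr₂).2 (by linarith)) ((div_le_one hr₂).2 (by linarith)) (by positivity) hm
    (by rwa [hnorm, ← add_div, div_le_one hr]) (hv.normalize hr one_pos) ?_ ?_ (r⁻¹ • (x - y)) ?_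
  · simp only [hback, one_mul] at hle
    rwa [mul_div_cancel₀ _ hr₂.ne', add_sub_cancel, div_div_eq_mul_div] at hle
  · rwa [← hpre, setLIntegral_rescale_pow hv.measurable_drift hr y measurableSet_ball, one_mul]
  · intro w hw
    have hwz : y + r • w - z = r • (w - r⁻¹ • (z - y)) := by
      rw [smul_sub, smul_inv_smul₀ hr.ne']
      abel
    rw [mul_zero, add_zero, one_mul]
    refine hbot _ ?_
    rwa [mem_ball, dist_eq_norm, hwz, norm_smul, Real.norm_of_nonneg hr.le, ← lt_div_iff₀' hr,
      ← mem_ball_iff_norm]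
  · rw [mem_ball_zero_iff, hnorm, div_lt_iff₀ hr]
    rw [mem_ball, dist_eq_norm] at hx
    linarith

/-- **Quantitative infimum comparison for supersolutions** (Lemma 4.2). -/
theorem infimum_comparison
    (n : ℕ) (hn : 0 < n) (ν S h : ℝ) (hν : 1 ≤ ν) (hh : h ∈ Set.Ioo (0 : ℝ) 1) :
    ∃ γ : ℝ, 0 < γ ∧
      ∀ (y z : En n) (s r ρ τ σ : ℝ) (v : En n × ℝ → ℝ)
        (a : En n × ℝ → Matrix (Fin n) (Fin n) ℝ) (b : En n × ℝ → En n),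
        0 < r → 0 < ρ →
        ball z ρ ⊆ ball y r →
        s - r ^ 2 ≤ τ → τ + h ^ 2 * r ^ 2 ≤ σ → σ ≤ s →
        IsC21 v (closure (pcyl (y, s) r)) →
        UnifParabolic ν a (pcyl (y, s) r) →
        LxnLtinfPow b (pcyl (y, s) r) ≤ ENNReal.ofReal S →
        (∀ X ∈ pcyl (y, s) r, 0 ≤ v X) →
        (∀ X ∈ pcyl (y, s) r, -Dt v X + Lop a b v X ≤ 0) →
        sInf (v '' (ball z ρ ×ˢ ({τ} : Set ℝ))) ≤
          (2 * r / ρ) ^ γ * sInf (v '' (ball y (r / 2) ×ˢ ({σ} : Set ℝ))) := by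
  have : NeZero n := ⟨hn.ne'⟩
  obtain ⟨γ, hγ, hcomp⟩ :=
    exists_infimum_comparison_cylinder (n := n) hν (le_max_right S 0) hh.1
  refine ⟨γ, by exact_mod_cast hγ, fun y z s r ρ τ σ v a b hr hρ hsub hτ hτσ hσ hv ha hb hv₀ hL =>
    ?_⟩
  obtain ⟨g, hg, hgb⟩ := exists_isSupersolution_of_isC21 hν hr hv ha hv₀ hL
  have hτσ' : τ ≤ σ := le_trans (le_add_of_nonneg_right (by positivity)) hτσ
  have hbot : BddBelow (v '' (ball z ρ ×ˢ {τ})) ∧ 0 ≤ sInf (v '' (ball z ρ ×ˢ {τ})) := by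
    have hnonneg : ∀ q ∈ v '' (ball z ρ ×ˢ {τ}), 0 ≤ q := by
      rintro _ ⟨⟨x, t⟩, ⟨hx, rfl⟩, rfl⟩
      exact hg.nonneg x (hsub hx) t ⟨hτ, hτσ'.trans hσ⟩
    exact ⟨⟨0, hnonneg⟩, Real.sInf_nonneg hnonneg⟩
  have hle := hcomp g v y z r ρ τ σ _ hr hρ hsub hτσ (by linarith) hbot.2
    (hg.mono subset_rfl hτ hσ) (hgb.trans (hb.trans (ofReal_le_ofReal (le_max_left S 0))))
    fun x hx => csInf_le hbot.1 ⟨(x, τ), ⟨hx, rfl⟩, rfl⟩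
  have hpos : 0 < (2 * r / ρ) ^ γ := by positivity
  rw [Real.rpow_natCast, ← div_le_iff₀' hpos]
  refine le_csInf (.image _ ⟨(y, σ), mem_ball_self (half_pos hr), rfl⟩) ?_
  rintro _ ⟨⟨x, t⟩, ⟨hx, rfl⟩, rfl⟩
  exact (div_le_iff₀' hpos).2 (hle x hx)
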